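/- Let W be any DMC with 0 < ν_min and set λ := √(ν_min/ν_max). Then for every ε ∈ (0,1): if ε ∈ (0, λ/(1+λ)], then limsup_{n→∞} (log M*_fb(n, ε) − nC)/√n ≤ √(ν_min)·Φ^{-1}((1/(2λ))·ε(1+λ)); and if ε ∈ (λ/(1+λ), 1), then limsup_{n→∞} (log M*_fb(n, ε) − nC)/√n ≤ √(ν_max)·Φ^{-1}((1/2)·[ε(1+λ) + (1−λ)]). -/

import Mathlib

open MeasureTheory Real Filter Set
open scoped BigOperators ENNReal Classical

noncomputable section

namespace Paper

variable {X Y : Type*} [Fintype X] [Fintype Y]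

/-- `P` is a probability mass function on the finite alphabet `X`. -/
def IsDist (P : X → ℝ) : Prop := (∀ x, 0 ≤ P x) ∧ ∑ x, P x = 1

/-- `W` is a discrete memoryless channel (a stochastic matrix). -/
def IsChannel (W : X → Y → ℝ) : Prop := ∀ x, IsDist (W x)

/-- `W` has no all-zero column. -/
def NoZeroColumn (W : X → Y → ℝ) : Prop := ∀ y, ∃ x, 0 < W x y

/-- Output distribution induced by input distribution `P` through `W`. -/
def outDist (P : X → ℝ) (W : X → Y → ℝ) (y : Y) : ℝ := ∑ x, P x * W x y

/-- Mutual information `I(P; W)` (in nats). -/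
def mutInfo (P : X → ℝ) (W : X → Y → ℝ) : ℝ :=
  ∑ x, ∑ y, P x * W x y * Real.log (W x y / outDist P W y)

/-- Shannon capacity `C`. -/
def capacity (W : X → Y → ℝ) : ℝ :=
  sSup {c | ∃ P, IsDist P ∧ mutInfo P W = c}

/-- The set of capacity-achieving input distributions `Π*`. -/
def capacityAchievers (W : X → Y → ℝ) : Set (X → ℝ) :=
  {P | IsDist P ∧ mutInfo P W = capacity W}

/-- The (unique) capacity-achieving output distribution `q*`. -/
def qStar (W : X → Y → ℝ) : Y → ℝ :=
  if h : (capacityAchievers W).Nonempty then outDist h.choose W else fun _ => 0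

/-- The information density `i*(x,y) = log (W(y|x)/q*(y))`. -/
def iStar (W : X → Y → ℝ) (x : X) (y : Y) : ℝ := Real.log (W x y / qStar W y)

/-- `ν_x = Var[i*(x,Y)]`, `Y ~ W(·|x)`. -/
def nu (W : X → Y → ℝ) (x : X) : ℝ :=
  ∑ y, W x y * (iStar W x y) ^ 2 - (∑ y, W x y * iStar W x y) ^ 2

/-- `V_min`. -/
def Vmin (W : X → Y → ℝ) : ℝ :=
  sInf {v | ∃ P ∈ capacityAchievers W, v = ∑ x, P x * nu W x}

/-- `V_max`. -/
def Vmax (W : X → Y → ℝ) : ℝ :=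
  sSup {v | ∃ P ∈ capacityAchievers W, v = ∑ x, P x * nu W x}

/-- `V_ε`. -/
def Veps (W : X → Y → ℝ) (ε : ℝ) : ℝ := if ε < 1/2 then Vmin W else Vmax W

/-- `ν_min = min_x ν_x`. -/
def numin (W : X → Y → ℝ) [Nonempty X] : ℝ := ⨅ x, nu W x

/-- `ν_max = max_x ν_x`. -/
def numax (W : X → Y → ℝ) [Nonempty X] : ℝ := ⨆ x, nu W x

/-- Average error probability of the feedback code `(enc, dec)` with `M` messages
and blocklength `n`. -/
def errProb (W : X → Y → ℝ) (n M : ℕ) (enc : Fin M → List Y → X)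
    (dec : (Fin n → Y) → Fin M) : ℝ :=
  (M : ℝ)⁻¹ * ∑ m : Fin M, ∑ y : Fin n → Y,
    (∏ k : Fin n, W (enc m ((List.ofFn y).take (k : ℕ))) (y k)) *
      (if dec y = m then 0 else 1)

/-- Minimum average error probability of `(n,R)` feedback codes. -/
def minErr (W : X → Y → ℝ) (n : ℕ) (R : ℝ) : ℝ :=
  sInf {e | ∃ enc dec, e = errProb W n ⌈Real.exp (n * R)⌉₊ enc dec}

/-- `M*_fb(n, ε)`. -/
def Mfb (W : X → Y → ℝ) (n : ℕ) (ε : ℝ) : ℝ :=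
  sSup {m | ∃ R : ℝ, m = (⌈Real.exp (n * R)⌉₊ : ℝ) ∧ minErr W n R ≤ ε}

/-- Standard Gaussian density `φ`. -/
def gpdf (u : ℝ) : ℝ := (Real.sqrt (2 * Real.pi))⁻¹ * Real.exp (-u ^ 2 / 2)

/-- Standard Gaussian CDF `Φ`. -/
def gcdf (t : ℝ) : ℝ := ∫ u in Set.Iic t, gpdf u

/-- Inverse Gaussian CDF `Φ⁻¹`. -/
def gcdfInv : ℝ → ℝ := Function.invFun gcdf

/-- The sequence `(log M*_fb(n,ε) - nC)/√n` whose liminf/limsup is the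
second-order coding rate with feedback. -/
def SOfb (W : X → Y → ℝ) (ε : ℝ) (n : ℕ) : ℝ :=
  (Real.log (Mfb W n ε) - n * capacity W) / Real.sqrt n

/-!
Feedback turns coding into a control problem: the encoder chooses, at every time and depending on
the past outputs, the law of the next increment of the information density centered at capacity.
These increments have nonpositive mean and a variance in `[ν_min, ν_max]`. In the diffusion limit,
the largest probability of ending above a level is that of the bang-bang control that uses the
volatility `√ν_max` below the level and `√ν_min` above it, given by an explicit function of the
distance to the level (`valueFn`). Its derivative is positive and it satisfies the
Hamilton-Jacobi-Bellman inequality, so by Taylor expansion its value along the rescaled process is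
a supermartingale up to an error that vanishes as the blocklength grows. The Verdú-Han converse
turns this tail bound into a bound on `M*_fb`. A lower bound is needed as well, since the real
`limsup` of a sequence tending to `-∞` is a junk value; it comes from Feinstein's code for the
channel without feedback.
-/

/-! ### Finite probability spaces -/

section FiniteProbability

variable {ι : Type*} [Fintype ι] {p ξ η : ι → ℝ} {s t : Set ι}

/-- The expectation of `ξ` under the mass function `p`. -/
def expect (p ξ : ι → ℝ) : ℝ := ∑ i, p i * ξ i

/-- The variance of `ξ` under the mass function `p`. -/
def variance (p ξ : ι → ℝ) : ℝ := expect p (fun i => ξ i ^ 2) - expect p ξ ^ 2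

/-- The mass that `p` gives to the set `s`. -/
def prob (p : ι → ℝ) (s : Set ι) : ℝ := ∑ i, s.indicator p i

theorem expect_add (p ξ η : ι → ℝ) :
    expect p (fun i => ξ i + η i) = expect p ξ + expect p η := by
  simp only [expect, mul_add, Finset.sum_add_distrib]

theorem expect_sub (p ξ η : ι → ℝ) :
    expect p (fun i => ξ i - η i) = expect p ξ - expect p η := by
  simp only [expect, mul_sub, Finset.sum_sub_distrib]

theorem expect_const_mul (p ξ : ι → ℝ) (c : ℝ) :
    expect p (fun i => c * ξ i) = c * expect p ξ := by
  simp only [expect, Finset.mul_sum, mul_left_comm]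

theorem IsDist.expect_const (hp : IsDist p) (c : ℝ) : expect p (fun _ => c) = c := by
  rw [expect, ← Finset.sum_mul, hp.2, one_mul]

theorem expect_le_expect (hp : ∀ i, 0 ≤ p i) (h : ∀ i, ξ i ≤ η i) :
    expect p ξ ≤ expect p η :=
  Finset.sum_le_sum fun i _ => mul_le_mul_of_nonneg_left (h i) (hp i)

theorem IsDist.expect_le (hp : IsDist p) {c : ℝ} (h : ∀ i, ξ i ≤ c) : expect p ξ ≤ c :=
  (expect_le_expect hp.1 h).trans_eq (hp.expect_const c)

theorem IsDist.le_expect (hp : IsDist p) {c : ℝ} (h : ∀ i, c ≤ ξ i) : c ≤ expect p ξ :=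
  (hp.expect_const c).symm.trans_le (expect_le_expect hp.1 h)

theorem IsDist.abs_expect_le (hp : IsDist p) {c : ℝ} (h : ∀ i, |ξ i| ≤ c) : |expect p ξ| ≤ c :=
  abs_le.2 ⟨hp.le_expect fun i => (abs_le.1 (h i)).1, hp.expect_le fun i => (abs_le.1 (h i)).2⟩

theorem IsDist.expect_sub_expect (hp : IsDist p) (ξ : ι → ℝ) :
    expect p (fun i => ξ i - expect p ξ) = 0 := by
  rw [expect_sub, hp.expect_const, sub_self]

theorem IsDist.variance_sub_const (hp : IsDist p) (ξ : ι → ℝ) (c : ℝ) :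
    variance p (fun i => ξ i - c) = variance p ξ := by
  have hsq : expect p (fun i => (ξ i - c) ^ 2) =
      expect p (fun i => ξ i ^ 2) - 2 * c * expect p ξ + c ^ 2 := by
    simp only [sub_sq', mul_right_comm, ← expect_const_mul, ← expect_sub]
    rw [← hp.expect_const (c ^ 2), ← expect_add]
    congr 1 with i
    rw [hp.expect_const]; ring
  rw [variance, hsq, expect_sub, hp.expect_const, variance]
  ring

theorem variance_eq_expect_sq (h : expect p ξ = 0) :
    variance p ξ = expect p (fun i => ξ i ^ 2) := by
  rw [variance, h]; ring

theorem prob_nonneg (hp : ∀ i, 0 ≤ p i) (s : Set ι) : 0 ≤ prob p s :=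
  Finset.sum_nonneg fun _ _ => indicator_nonneg (fun i _ => hp i) _

theorem prob_le_prob_of_ne_zero (hp : ∀ i, 0 ≤ p i) (h : ∀ i, p i ≠ 0 → i ∈ s → i ∈ t) :
    prob p s ≤ prob p t := by
  refine Finset.sum_le_sum fun i _ => ?_
  by_cases hi : p i = 0
  · simp only [indicator_apply, hi, ite_self, le_refl]
  · by_cases hs : i ∈ s
    · rw [indicator_of_mem hs, indicator_of_mem (h i hi hs)]
    · exact (indicator_of_notMem hs p).trans_le (indicator_nonneg (fun j _ => hp j) i)

theorem prob_mono (hp : ∀ i, 0 ≤ p i) (h : s ⊆ t) : prob p s ≤ prob p t :=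
  prob_le_prob_of_ne_zero hp fun _ _ hi => h hi

theorem IsDist.prob_univ (hp : IsDist p) : prob p univ = 1 := by
  simpa only [prob, indicator_univ] using hp.2

theorem IsDist.prob_le_one (hp : IsDist p) (s : Set ι) : prob p s ≤ 1 :=
  (prob_mono hp.1 (subset_univ s)).trans_eq hp.prob_univ

theorem IsDist.prob_compl (hp : IsDist p) (s : Set ι) : prob p sᶜ = 1 - prob p s := by
  rw [eq_sub_iff_add_eq', ← hp.prob_univ]
  simp only [prob, ← Finset.sum_add_distrib, indicator_univ]
  exact Finset.sum_congr rfl fun i _ => indicator_self_add_compl_apply s p i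

theorem prob_union_le (hp : ∀ i, 0 ≤ p i) (s t : Set ι) : prob p (s ∪ t) ≤ prob p s + prob p t := by
  simp only [prob, ← Finset.sum_add_distrib]
  refine Finset.sum_le_sum fun i _ => ?_
  exact (le_add_of_nonneg_right (indicator_nonneg (fun i _ => hp i) _)).trans_eq
    (indicator_union_add_inter_apply p s t i)

theorem mul_prob_le_expect {c : ℝ} (hp : ∀ i, 0 ≤ p i) (hξ : ∀ i, 0 ≤ ξ i)
    (hs : ∀ i ∈ s, c ≤ ξ i) : c * prob p s ≤ expect p ξ := by
  rw [prob, Finset.mul_sum]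
  refine Finset.sum_le_sum fun i _ => ?_
  by_cases hi : i ∈ s
  · rw [indicator_of_mem hi, mul_comm]
    exact mul_le_mul_of_nonneg_left (hs i hi) (hp i)
  · rw [indicator_of_notMem hi, mul_zero]
    exact mul_nonneg (hp i) (hξ i)

theorem IsDist.exists_pos (hp : IsDist p) : ∃ i, 0 < p i := by
  by_contra! h
  exact ((Finset.sum_nonpos fun i _ => h i).trans_lt one_pos).ne hp.2

theorem IsDist.exists_pos_and_le_expect (hp : IsDist p) (ξ : ι → ℝ) :
    ∃ i, 0 < p i ∧ ξ i ≤ expect p ξ := by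
  by_contra! h
  obtain ⟨i, hi⟩ := hp.exists_pos
  have hlt : expect p (fun _ => expect p ξ) < expect p ξ := by
    refine Finset.sum_lt_sum (fun i _ => ?_)
      ⟨i, Finset.mem_univ i, mul_lt_mul_of_pos_left (h i hi) hi⟩
    rcases (hp.1 i).eq_or_lt with h0 | h0
    · rw [← h0, zero_mul, zero_mul]
    · exact mul_le_mul_of_nonneg_left (h i h0).le h0.le
  rw [hp.expect_const] at hlt
  exact lt_irrefl _ hlt

end FiniteProbability

/-! ### The Gaussian distribution function -/

section Gaussian

open ProbabilityTheory

theorem gpdf_eq_gaussianPDFReal : gpdf = gaussianPDFReal 0 1 := by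
  ext u; simp [gpdf, gaussianPDFReal]

theorem gpdf_pos (u : ℝ) : 0 < gpdf u := by
  unfold gpdf; positivity

theorem continuous_gpdf : Continuous gpdf := by
  unfold gpdf; fun_prop

theorem gpdf_neg (u : ℝ) : gpdf (-u) = gpdf u := by
  rw [gpdf, neg_sq, gpdf]

theorem integrable_gpdf : Integrable gpdf :=
  gpdf_eq_gaussianPDFReal ▸ integrable_gaussianPDFReal 0 1

theorem integral_gpdf : ∫ u, gpdf u = 1 :=
  gpdf_eq_gaussianPDFReal ▸ integral_gaussianPDFReal_eq_one 0 one_ne_zero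

theorem gcdf_eq_cdf : gcdf = cdf (gaussianReal 0 1) := by
  ext t
  rw [cdf_eq_real, Measure.real, gaussianReal_apply_eq_integral 0 one_ne_zero,
    ENNReal.toReal_ofReal (integral_nonneg fun x => gaussianPDFReal_nonneg 0 1 x),
    ← gpdf_eq_gaussianPDFReal, gcdf]

theorem tendsto_gcdf_atTop : Tendsto gcdf atTop (nhds 1) :=
  gcdf_eq_cdf ▸ tendsto_cdf_atTop _

theorem tendsto_gcdf_atBot : Tendsto gcdf atBot (nhds 0) :=
  gcdf_eq_cdf ▸ tendsto_cdf_atBot _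

theorem hasDerivAt_gcdf (t : ℝ) : HasDerivAt gcdf (gpdf t) t := by
  have h : gcdf = fun s => gcdf 0 + ∫ u in (0 : ℝ)..s, gpdf u := by
    ext s
    rw [← intervalIntegral.integral_Iic_sub_Iic integrable_gpdf.integrableOn
      integrable_gpdf.integrableOn, gcdf, gcdf, add_sub_cancel]
  rw [h]
  exact (intervalIntegral.integral_hasDerivAt_right (continuous_gpdf.intervalIntegrable _ _)
    (continuous_gpdf.stronglyMeasurableAtFilter _ _) continuous_gpdf.continuousAt).const_add _

theorem continuous_gcdf : Continuous gcdf :=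
  continuous_iff_continuousAt.2 fun t => (hasDerivAt_gcdf t).continuousAt

theorem strictMono_gcdf : StrictMono gcdf :=
  strictMono_of_deriv_pos fun t => (hasDerivAt_gcdf t).deriv ▸ gpdf_pos t

theorem gcdf_pos (t : ℝ) : 0 < gcdf t := by
  have h : 0 ≤ gcdf (t - 1) := gcdf_eq_cdf ▸ cdf_nonneg _ _
  exact h.trans_lt (strictMono_gcdf (sub_one_lt t))

theorem gcdf_neg (t : ℝ) : gcdf (-t) = 1 - gcdf t := by
  have hupper : gcdf (-t) = ∫ u in Ioi t, gpdf u := by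
    simpa only [gcdf, gpdf_neg, neg_neg] using integral_comp_neg_Iic (-t) gpdf
  have htotal := integral_add_compl (measurableSet_Iic (a := t)) integrable_gpdf
  rw [compl_Iic, integral_gpdf] at htotal
  exact hupper.trans (eq_sub_of_add_eq' htotal)

theorem gcdf_zero : gcdf 0 = 1 / 2 := by
  have h := gcdf_neg 0
  rw [neg_zero] at h
  linarith

theorem gcdf_gcdfInv {p : ℝ} (h0 : 0 < p) (h1 : p < 1) : gcdf (gcdfInv p) = p :=
  Function.invFun_eq <| mem_range_of_exists_le_of_exists_ge continuous_gcdf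
    ((tendsto_gcdf_atBot.eventually (gt_mem_nhds h0)).exists.imp fun _ => le_of_lt)
    ((tendsto_gcdf_atTop.eventually (lt_mem_nhds h1)).exists.imp fun _ => le_of_lt)

theorem hasDerivAt_gpdf (u : ℝ) : HasDerivAt gpdf (-(u * gpdf u)) u := by
  have h : HasDerivAt (fun u : ℝ => -u ^ 2 / 2) (-u) u := by
    refine (((hasDerivAt_pow 2 u).fun_neg).div_const 2).congr_deriv ?_
    push_cast; ring
  refine (h.exp.const_mul (√(2 * π))⁻¹).congr_deriv ?_
  rw [gpdf]; ring

theorem gpdf_le_exp (u : ℝ) : gpdf u ≤ exp (-u ^ 2 / 2) := by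
  have h : 1 ≤ √(2 * π) := Real.one_le_sqrt.2 (by linarith [Real.pi_gt_three])
  exact mul_le_of_le_one_left (exp_pos _).le (inv_le_one_of_one_le₀ h)

theorem abs_pow_mul_gpdf_le (k : ℕ) (u : ℝ) : |u| ^ k * gpdf u ≤ k.factorial * exp (1 / 2) := by
  have hpow : |u| ^ k ≤ k.factorial * exp |u| := by
    rw [← div_le_iff₀' (by positivity)]
    exact pow_div_factorial_le_exp _ (abs_nonneg u) k
  have hexp : |u| + -u ^ 2 / 2 ≤ 1 / 2 := by nlinarith [sq_nonneg (|u| - 1), sq_abs u]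
  calc |u| ^ k * gpdf u ≤ k.factorial * exp |u| * exp (-u ^ 2 / 2) :=
        mul_le_mul hpow (gpdf_le_exp u) (gpdf_pos u).le (by positivity)
    _ = k.factorial * exp (|u| + -u ^ 2 / 2) := by rw [mul_assoc, ← exp_add]
    _ ≤ k.factorial * exp (1 / 2) := by gcongr

theorem exists_lipschitzWith_mul_gpdf : ∃ K, LipschitzWith K fun u => u * gpdf u := by
  have hderiv (u : ℝ) : HasDerivAt (fun u => u * gpdf u) (gpdf u - u ^ 2 * gpdf u) u :=
    ((hasDerivAt_id u).mul (hasDerivAt_gpdf u)).congr_deriv (by simp only [id_eq]; ring)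
  refine ⟨(2 * exp (1 / 2)).toNNReal, lipschitzWith_of_nnnorm_deriv_le
    (fun u => (hderiv u).differentiableAt) fun u => ?_⟩
  have h0 := abs_pow_mul_gpdf_le 0 u
  have h2 := abs_pow_mul_gpdf_le 2 u
  rw [pow_zero, Nat.factorial_zero, Nat.cast_one, one_mul, one_mul] at h0
  rw [sq_abs, Nat.factorial_two, Nat.cast_two] at h2
  rw [(hderiv u).deriv, Real.le_toNNReal_iff_coe_le (by positivity), coe_nnnorm]
  exact abs_sub_le_of_nonneg_of_le (gpdf_pos u).le (h0.trans (by linarith [exp_pos (1 / 2)]))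
    (mul_nonneg (sq_nonneg u) (gpdf_pos u).le) h2

end Gaussian

/-! ### Gluing and Taylor estimates -/

section Calculus

open scoped NNReal

variable {F H F' H' f f' f'' : ℝ → ℝ}

theorem hasDerivAt_ite_nonpos (hF : ∀ z, HasDerivAt F (F' z) z) (hH : ∀ z, HasDerivAt H (H' z) z)
    (h : F 0 = H 0) (h' : F' 0 = H' 0) (z : ℝ) :
    HasDerivAt (fun z => if z ≤ 0 then F z else H z) (if z ≤ 0 then F' z else H' z) z := by
  rcases lt_trichotomy z 0 with hz | rfl | hz
  · rw [if_pos hz.le]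
    refine (hF z).congr_of_eventuallyEq ?_
    filter_upwards [gt_mem_nhds hz] with y hy using if_pos hy.le
  · rw [if_pos le_rfl, ← hasDerivWithinAt_univ, ← Iic_union_Ici (a := (0 : ℝ))]
    refine HasDerivWithinAt.union ?_ ?_
    · exact (hF 0).hasDerivWithinAt.congr (fun y hy => if_pos hy) (if_pos le_rfl)
    · rw [h']
      refine (hH 0).hasDerivWithinAt.congr (fun y hy => ?_) ((if_pos le_rfl).trans h)
      rcases (mem_Ici.1 hy).eq_or_lt with rfl | hy
      exacts [(if_pos le_rfl).trans h, if_neg hy.not_ge]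
  · rw [if_neg hz.not_ge]
    refine (hH z).congr_of_eventuallyEq ?_
    filter_upwards [lt_mem_nhds hz] with y hy using if_neg hy.not_ge

theorem lipschitzWith_ite_nonpos {K L : ℝ≥0} (hF : LipschitzWith K F) (hH : LipschitzWith L H)
    (h : F 0 = H 0) : LipschitzWith (K + L) fun z => if z ≤ 0 then F z else H z := by
  have hsplit : (fun z => if z ≤ 0 then F z else H z) =
      fun z => F (min z 0) + H (max z 0) - F 0 := by
    ext z
    split_ifs with hz
    · rw [min_eq_left hz, max_eq_right hz, h, add_sub_cancel_right]
    · rw [min_eq_right (not_le.1 hz).le, max_eq_left (not_le.1 hz).le, add_sub_cancel_left]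
  rw [hsplit]
  simpa only [mul_one, add_zero, Function.comp_apply, id_eq] using
    ((hF.comp (LipschitzWith.id.min_const 0)).add
    (hH.comp (LipschitzWith.id.max_const 0))).sub (LipschitzWith.const (F 0))

theorem abs_sub_sub_mul_le {a b c K : ℝ} (hf : ∀ z ∈ uIcc a b, HasDerivAt f (f' z) z)
    (hK : ∀ z ∈ uIcc a b, |f' z - c| ≤ K) : |f b - f a - c * (b - a)| ≤ K * |b - a| := by
  have hderiv : ∀ z ∈ uIcc a b, HasDerivAt (fun z => f z - c * z) (f' z - c) z := fun z hz => by
    simpa only [mul_one] using (hf z hz).fun_sub ((hasDerivAt_id' z).const_mul c)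
  have hmvt := (convex_uIcc a b).norm_image_sub_le_of_norm_hasDerivWithin_le
    (fun z hz => (hderiv z hz).hasDerivWithinAt) hK left_mem_uIcc right_mem_uIcc
  rw [Real.norm_eq_abs, Real.norm_eq_abs] at hmvt
  convert hmvt using 2
  ring

theorem abs_taylor_one_le {a b K : ℝ} (hf : ∀ z ∈ uIcc a b, HasDerivAt f (f' z) z)
    (hf' : ∀ z ∈ uIcc a b, HasDerivAt f' (f'' z) z) (hK : ∀ z ∈ uIcc a b, |f'' z| ≤ K) :
    |f b - f a - f' a * (b - a)| ≤ K * (b - a) ^ 2 := by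
  have hK0 : 0 ≤ K := (abs_nonneg _).trans (hK a left_mem_uIcc)
  have hf'_sub : ∀ z ∈ uIcc a b, |f' z - f' a| ≤ K * |b - a| := fun z hz => by
    have hsub : uIcc a z ⊆ uIcc a b := uIcc_subset_uIcc_left hz
    have := abs_sub_sub_mul_le (c := 0) (fun w hw => hf' w (hsub hw))
      fun w hw => (sub_zero (f'' w)).symm ▸ hK w (hsub hw)
    rw [zero_mul, sub_zero] at this
    exact this.trans (mul_le_mul_of_nonneg_left (abs_sub_left_of_mem_uIcc hz) hK0)
  refine (abs_sub_sub_mul_le hf hf'_sub).trans_eq ?_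
  rw [mul_assoc, abs_mul_abs_self, sq]

theorem abs_taylor_two_le {L : ℝ≥0} (hf : ∀ z, HasDerivAt f (f' z) z)
    (hf' : ∀ z, HasDerivAt f' (f'' z) z) (hL : LipschitzWith L f'') (a b : ℝ) :
    |f b - f a - f' a * (b - a) - f'' a * (b - a) ^ 2 / 2| ≤ L * |b - a| ^ 3 := by
  have hf'_sub : ∀ z ∈ uIcc a b, |f' z - f'' a * (z - a) - f' a| ≤ L * |b - a| * |b - a| :=
    fun z hz => by
    have hz' : |z - a| ≤ |b - a| := abs_sub_left_of_mem_uIcc hz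
    rw [sub_right_comm]
    refine (abs_sub_sub_mul_le (fun w _ => hf' w) fun w hw => (hL.dist_le_mul w a).trans ?_).trans
      (mul_le_mul_of_nonneg_left hz' (by positivity))
    exact mul_le_mul_of_nonneg_left ((abs_sub_left_of_mem_uIcc hw).trans hz') L.2
  have hderiv : ∀ z ∈ uIcc a b, HasDerivAt (fun w => f w - f'' a * (w - a) ^ 2 / 2)
      (f' z - f'' a * (z - a)) z := fun z _ => by
    refine ((hf z).fun_sub (((((hasDerivAt_id z).sub_const a).pow 2).const_mul
      (f'' a)).div_const 2)).congr_deriv ?_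
    simp only [id_eq]; push_cast; ring
  have htaylor := abs_sub_sub_mul_le hderiv hf'_sub
  convert htaylor using 1
  · congr 1; ring
  · ring

variable {ι : Type*} [Fintype ι] {p ξ : ι → ℝ}

theorem expect_taylor_two_le {L : ℝ≥0} {B : ℝ} (hf : ∀ z, HasDerivAt f (f' z) z)
    (hf' : ∀ z, HasDerivAt f' (f'' z) z) (hL : LipschitzWith L f'') (hp : IsDist p)
    (hξ : ∀ i, |ξ i| ≤ B) (hmean : expect p ξ = 0) (z h : ℝ) :
    expect p (fun i => f (z + h * ξ i)) ≤
      f z + f'' z * h ^ 2 * variance p ξ / 2 + L * (|h| * B) ^ 3 := by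
  have hpoint (i : ι) : f (z + h * ξ i) ≤
      f z + L * (|h| * B) ^ 3 + f' z * h * ξ i + f'' z * h ^ 2 / 2 * ξ i ^ 2 := by
    have htaylor := (abs_le.1 (abs_taylor_two_le hf hf' hL z (z + h * ξ i))).2
    have hrem : L * |h * ξ i| ^ 3 ≤ L * (|h| * B) ^ 3 := by
      rw [abs_mul]; gcongr; exact hξ i
    rw [add_sub_cancel_left] at htaylor
    linarith
  refine (expect_le_expect hp.1 hpoint).trans_eq ?_
  rw [expect_add, expect_add, expect_const_mul, expect_const_mul, hp.expect_const, hmean,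
    ← variance_eq_expect_sq hmean]
  ring

theorem hasDerivAt_comp_div (hf : ∀ z, HasDerivAt f (f' z) z) (s z : ℝ) :
    HasDerivAt (fun z => f (z / s)) (f' (z / s) / s) z := by
  refine ((hf (z / s)).comp z ((hasDerivAt_id' z).div_const s)).congr_deriv ?_
  rw [mul_one_div]

theorem hasDerivAt_comp_div_sqrt (hf : ∀ z, HasDerivAt f (f' z) z) (x : ℝ) {t : ℝ} (ht : 0 < t) :
    HasDerivAt (fun t => f (x / √t)) (-(x / √t * f' (x / √t)) / (2 * t)) t := by
  refine ((hf (x / √t)).comp t ((hasDerivAt_const t x).fun_div (hasDerivAt_sqrt ht.ne')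
    (sqrt_ne_zero'.2 ht))).congr_deriv ?_
  have := sqrt_ne_zero'.2 ht
  field_simp
  rw [sq_sqrt ht.le]; ring

theorem hasDerivAt_deriv_comp_div_sqrt (hf' : ∀ z, HasDerivAt f' (f'' z) z) (x : ℝ) {t : ℝ}
    (ht : 0 < t) : HasDerivAt (fun t => -(x / √t * f' (x / √t)) / (2 * t))
      ((3 * (x / √t * f' (x / √t)) + (x / √t) ^ 2 * f'' (x / √t)) / (4 * t ^ 2)) t := by
  have hmul (z : ℝ) : HasDerivAt (fun z => z * f' z) (f' z + z * f'' z) z :=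
    ((hasDerivAt_id' z).fun_mul (hf' z)).congr_deriv (by rw [one_mul])
  refine ((hasDerivAt_comp_div_sqrt hmul x ht).fun_neg.fun_div
    ((hasDerivAt_id' t).const_mul 2) (by positivity)).congr_deriv ?_
  field_simp
  ring

/-- The subtracted term is `-1` times the derivative of `t ↦ f (x / √t)` at `t = T`. -/
theorem sub_mul_deriv_div_le {C T : ℝ} (hf : ∀ z, HasDerivAt f (f' z) z)
    (hf' : ∀ z, HasDerivAt f' (f'' z) z) (hC : ∀ z, |z * f' z| ≤ C)
    (hC' : ∀ z, |z ^ 2 * f'' z| ≤ C) (hT : 0 < T) (x : ℝ) :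
    f (x / √T) - x / √T * f' (x / √T) / (2 * T) ≤ f (x / √(T + 1)) + C / T ^ 2 := by
  have hpos : ∀ t ∈ uIcc T (T + 1), T ≤ t ∧ 0 < t := fun t ht => by
    rw [uIcc_of_le (le_add_of_nonneg_right zero_le_one)] at ht
    exact ⟨ht.1, hT.trans_le ht.1⟩
  have hbound : ∀ t ∈ uIcc T (T + 1),
      |(3 * (x / √t * f' (x / √t)) + (x / √t) ^ 2 * f'' (x / √t)) / (4 * t ^ 2)| ≤ C / T ^ 2 :=
    fun t ht => by
    obtain ⟨hTt, ht0⟩ := hpos t ht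
    have hnum : |3 * (x / √t * f' (x / √t)) + (x / √t) ^ 2 * f'' (x / √t)| ≤ 4 * C := by
      refine (abs_add_le _ _).trans ?_
      rw [abs_mul, abs_of_pos (three_pos : (0 : ℝ) < 3)]
      linarith [hC (x / √t), hC' (x / √t)]
    have hC0 : 0 ≤ C := (abs_nonneg _).trans (hC 0)
    rw [abs_div, abs_of_pos (by positivity : 0 < 4 * t ^ 2)]
    calc _ ≤ 4 * C / (4 * t ^ 2) := by gcongr
      _ = C / t ^ 2 := mul_div_mul_left _ _ four_ne_zero
      _ ≤ C / T ^ 2 := by gcongr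
  have htaylor := (abs_le.1 (abs_taylor_one_le
    (fun t ht => hasDerivAt_comp_div_sqrt hf x (hpos t ht).2)
    (fun t ht => hasDerivAt_deriv_comp_div_sqrt hf' x (hpos t ht).2) hbound)).1
  rw [add_sub_cancel_left] at htaylor
  linarith [neg_div (2 * T) (x / √T * f' (x / √T))]

end Calculus

/-! ### The value function -/

section ValueFunction

open scoped NNReal

/-- The optimal volatility in `{s₁, s₂}` at position `z`: gamble with `s₂` on the losing side of
`0`, and play safe with `s₁` on the winning side. -/
def vol (s₁ s₂ z : ℝ) : ℝ := if z ≤ 0 then s₂ else s₁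

/-- The value function, at unit horizon, of the control problem in which the volatility may be
chosen in `[s₁, s₂]` so as to maximize the probability of ending above `0`. -/
def valueFn (s₁ s₂ z : ℝ) : ℝ :=
  if z ≤ 0 then 2 * s₂ / (s₁ + s₂) * gcdf (z / s₂)
  else 1 - 2 * s₁ / (s₁ + s₂) * (1 - gcdf (z / s₁))

/-- The first derivative of `valueFn`. -/
def valueDeriv (s₁ s₂ z : ℝ) : ℝ := 2 / (s₁ + s₂) * gpdf (z / vol s₁ s₂ z)

/-- The second derivative of `valueFn`. -/
def valueDeriv₂ (s₁ s₂ z : ℝ) : ℝ :=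
  -(2 / (s₁ + s₂) * (z / vol s₁ s₂ z ^ 2 * gpdf (z / vol s₁ s₂ z)))

variable {s₁ s₂ : ℝ}

theorem vol_pos (h₁ : 0 < s₁) (h₂ : 0 < s₂) (z : ℝ) : 0 < vol s₁ s₂ z := by
  unfold vol; split_ifs <;> assumption

theorem vol_le_add (h₁ : 0 < s₁) (h₂ : 0 < s₂) (z : ℝ) : vol s₁ s₂ z ≤ s₁ + s₂ := by
  unfold vol; split_ifs <;> linarith

theorem mul_sq_vol_le {ν : ℝ} (hν₁ : s₁ ^ 2 ≤ ν) (hν₂ : ν ≤ s₂ ^ 2) (z : ℝ) :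
    z * vol s₁ s₂ z ^ 2 ≤ z * ν := by
  unfold vol
  split_ifs with hz
  · exact mul_le_mul_of_nonpos_left hν₂ hz
  · exact mul_le_mul_of_nonneg_left hν₁ (not_le.1 hz).le

theorem hasDerivAt_valueFn (h₁ : 0 < s₁) (h₂ : 0 < s₂) (z : ℝ) :
    HasDerivAt (valueFn s₁ s₂) (valueDeriv s₁ s₂ z) z := by
  refine (hasDerivAt_ite_nonpos (fun z => (hasDerivAt_comp_div hasDerivAt_gcdf s₂ z).const_mul _)
    (fun z =>
      (((hasDerivAt_comp_div hasDerivAt_gcdf s₁ z).const_sub 1).const_mul _).const_sub 1)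
    ?_ ?_ z).congr_deriv ?_
  · rw [zero_div, zero_div, gcdf_zero]; field_simp; ring
  · rw [zero_div, zero_div]; field_simp
  · unfold valueDeriv vol; split_ifs <;> field_simp

theorem hasDerivAt_valueDeriv (s₁ s₂ z : ℝ) :
    HasDerivAt (valueDeriv s₁ s₂) (valueDeriv₂ s₁ s₂ z) z := by
  have hglue : valueDeriv s₁ s₂ =
      fun z => 2 / (s₁ + s₂) * if z ≤ 0 then gpdf (z / s₂) else gpdf (z / s₁) := by
    ext z; unfold valueDeriv vol; split_ifs <;> rfl
  rw [hglue]
  refine ((hasDerivAt_ite_nonpos (hasDerivAt_comp_div hasDerivAt_gpdf s₂)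
    (hasDerivAt_comp_div hasDerivAt_gpdf s₁) ?_ ?_ z).const_mul _).congr_deriv ?_
  · rw [zero_div, zero_div]
  · simp only [zero_div, zero_mul, neg_zero]
  · unfold valueDeriv₂ vol; split_ifs <;> ring

theorem valueDeriv_pos (h₁ : 0 < s₁) (h₂ : 0 < s₂) (z : ℝ) : 0 < valueDeriv s₁ s₂ z :=
  mul_pos (by positivity) (gpdf_pos _)

theorem strictMono_valueFn (h₁ : 0 < s₁) (h₂ : 0 < s₂) : StrictMono (valueFn s₁ s₂) :=
  strictMono_of_deriv_pos fun z =>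
    (hasDerivAt_valueFn h₁ h₂ z).deriv ▸ valueDeriv_pos h₁ h₂ z

theorem continuous_valueFn (h₁ : 0 < s₁) (h₂ : 0 < s₂) : Continuous (valueFn s₁ s₂) :=
  continuous_iff_continuousAt.2 fun z => (hasDerivAt_valueFn h₁ h₂ z).continuousAt

theorem valueFn_pos (h₁ : 0 < s₁) (h₂ : 0 < s₂) (z : ℝ) : 0 < valueFn s₁ s₂ z := by
  have h : 0 < valueFn s₁ s₂ (min z 0) := by
    rw [valueFn, if_pos (min_le_right z 0)]
    exact mul_pos (by positivity) (gcdf_pos _)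
  exact h.trans_le ((strictMono_valueFn h₁ h₂).monotone (min_le_left z 0))

theorem valueFn_of_nonneg (h₁ : 0 < s₁) (h₂ : 0 < s₂) {z : ℝ} (hz : 0 ≤ z) :
    valueFn s₁ s₂ z = 1 - 2 * s₁ / (s₁ + s₂) * (1 - gcdf (z / s₁)) := by
  rcases hz.eq_or_lt with rfl | hz
  · rw [valueFn, if_pos le_rfl, zero_div, zero_div, gcdf_zero]; field_simp; ring
  · exact if_neg hz.not_ge

theorem tendsto_valueFn_atTop (h₁ : 0 < s₁) (h₂ : 0 < s₂) :
    Tendsto (valueFn s₁ s₂) atTop (nhds 1) := by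
  have h := (((tendsto_gcdf_atTop.comp (tendsto_id.atTop_div_const h₁)).const_sub 1).const_mul
    (2 * s₁ / (s₁ + s₂))).const_sub 1
  rw [sub_self, mul_zero, sub_zero] at h
  refine h.congr' ?_
  filter_upwards [eventually_ge_atTop 0] with z hz using (valueFn_of_nonneg h₁ h₂ hz).symm

/-- The Hamilton-Jacobi-Bellman inequality, in self-similar form. -/
theorem mul_valueDeriv₂_le (h₁ : 0 < s₁) (h₂ : 0 < s₂) {ν : ℝ} (hν₁ : s₁ ^ 2 ≤ ν)
    (hν₂ : ν ≤ s₂ ^ 2) (z : ℝ) :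
    ν * valueDeriv₂ s₁ s₂ z ≤ -(z * valueDeriv s₁ s₂ z) := by
  have hvol := vol_pos h₁ h₂ z
  have hz : z ≤ z * ν / vol s₁ s₂ z ^ 2 :=
    (le_div_iff₀ (by positivity)).2 (mul_sq_vol_le hν₁ hν₂ z)
  calc ν * valueDeriv₂ s₁ s₂ z = -(z * ν / vol s₁ s₂ z ^ 2 * valueDeriv s₁ s₂ z) := by
        rw [valueDeriv₂, valueDeriv]; ring
    _ ≤ -(z * valueDeriv s₁ s₂ z) :=
      neg_le_neg (mul_le_mul_of_nonneg_right hz (valueDeriv_pos h₁ h₂ z).le)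

theorem abs_vol_mul_pow_mul_gpdf_le (h₁ : 0 < s₁) (h₂ : 0 < s₂) (k : ℕ) (z u : ℝ) :
    |2 * vol s₁ s₂ z / (s₁ + s₂) * (u ^ k * gpdf u)| ≤ 2 * (k.factorial * exp (1 / 2)) := by
  have hvol := vol_pos h₁ h₂ z
  have hcoeff : 2 * vol s₁ s₂ z / (s₁ + s₂) ≤ 2 := by
    rw [div_le_iff₀ (by positivity)]
    linarith [vol_le_add h₁ h₂ z]
  rw [abs_mul, abs_mul (u ^ k), abs_pow, abs_of_pos (gpdf_pos u),
    abs_of_pos (by positivity : 0 < 2 * vol s₁ s₂ z / (s₁ + s₂))]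
  exact mul_le_mul hcoeff (abs_pow_mul_gpdf_le k u)
    (mul_nonneg (by positivity) (gpdf_pos u).le) zero_le_two

theorem abs_mul_valueDeriv_le (h₁ : 0 < s₁) (h₂ : 0 < s₂) (z : ℝ) :
    |z * valueDeriv s₁ s₂ z| ≤ 12 * exp (1 / 2) := by
  have h := abs_vol_mul_pow_mul_gpdf_le h₁ h₂ 1 z (z / vol s₁ s₂ z)
  have heq : z * valueDeriv s₁ s₂ z = 2 * vol s₁ s₂ z / (s₁ + s₂) *
      ((z / vol s₁ s₂ z) ^ 1 * gpdf (z / vol s₁ s₂ z)) := by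
    have := (vol_pos h₁ h₂ z).ne'
    rw [valueDeriv]; field_simp
  rw [heq]
  refine h.trans ?_
  rw [Nat.factorial_one, Nat.cast_one]
  linarith [exp_pos (1 / 2)]

theorem abs_sq_mul_valueDeriv₂_le (h₁ : 0 < s₁) (h₂ : 0 < s₂) (z : ℝ) :
    |z ^ 2 * valueDeriv₂ s₁ s₂ z| ≤ 12 * exp (1 / 2) := by
  have h := abs_vol_mul_pow_mul_gpdf_le h₁ h₂ 3 z (z / vol s₁ s₂ z)
  have heq : z ^ 2 * valueDeriv₂ s₁ s₂ z = -(2 * vol s₁ s₂ z / (s₁ + s₂) *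
      ((z / vol s₁ s₂ z) ^ 3 * gpdf (z / vol s₁ s₂ z))) := by
    have := (vol_pos h₁ h₂ z).ne'
    rw [valueDeriv₂]; field_simp
  rw [heq, abs_neg]
  refine h.trans_eq ?_
  rw [show Nat.factorial 3 = 6 from rfl]
  push_cast
  ring

theorem exists_lipschitzWith_valueDeriv₂ (s₁ s₂ : ℝ) :
    ∃ L, LipschitzWith L (valueDeriv₂ s₁ s₂) := by
  obtain ⟨K, hK⟩ := exists_lipschitzWith_mul_gpdf
  have hscaled (s : ℝ) :
      ∃ L, LipschitzWith L fun z => -2 / (s₁ + s₂) / s * (s⁻¹ * z * gpdf (s⁻¹ * z)) :=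
    ⟨_, (lipschitzWith_smul (-2 / (s₁ + s₂) / s)).comp (hK.comp (lipschitzWith_smul s⁻¹))⟩
  obtain ⟨L₁, hL₁⟩ := hscaled s₁
  obtain ⟨L₂, hL₂⟩ := hscaled s₂
  have hglue := lipschitzWith_ite_nonpos hL₂ hL₁ (by simp only [mul_zero, zero_mul])
  refine ⟨L₂ + L₁, ?_⟩
  convert hglue using 2 with z
  unfold valueDeriv₂ vol
  split_ifs <;> ring_nf

/-- An increment `ξ` that the controller may choose: bounded, with nonpositive drift and volatility
in `[s₁, s₂]`. -/
structure IsAdmissible {ι : Type*} [Fintype ι] (s₁ s₂ B : ℝ) (p ξ : ι → ℝ) : Prop where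
  isDist : IsDist p
  abs_le : ∀ i, |ξ i| ≤ B
  expect_nonpos : expect p ξ ≤ 0
  sq_le_variance : s₁ ^ 2 ≤ variance p ξ
  variance_le_sq : variance p ξ ≤ s₂ ^ 2

theorem div_sq_le_div_sqrt_pow_three {c T : ℝ} (hc : 0 ≤ c) (hT : 1 ≤ T) :
    c / T ^ 2 ≤ c / √T ^ 3 := by
  have hpow : √T ^ 3 ≤ T ^ 2 := by
    calc √T ^ 3 ≤ √T ^ 4 := pow_le_pow_right₀ (one_le_sqrt.2 hT) (by norm_num)
      _ = T ^ 2 := by rw [pow_mul (√T) 2 2, sq_sqrt (zero_le_one.trans hT)]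
  gcongr

theorem exists_expect_valueFn_step_le {ι : Type*} [Fintype ι] (h₁ : 0 < s₁) (h₂ : 0 < s₂)
    {B : ℝ} (hB : 0 ≤ B) : ∃ K, 0 ≤ K ∧ ∀ p ξ : ι → ℝ, IsAdmissible s₁ s₂ B p ξ → ∀ x T, 1 ≤ T →
      expect p (fun i => valueFn s₁ s₂ ((x + ξ i) / √T)) ≤
        valueFn s₁ s₂ (x / √(T + 1)) + K / √T ^ 3 := by
  obtain ⟨L, hL⟩ := exists_lipschitzWith_valueDeriv₂ s₁ s₂
  refine ⟨L * (2 * B) ^ 3 + 12 * exp (1 / 2), by positivity, fun p ξ hξ x T hT => ?_⟩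
  have hT0 : 0 < T := one_pos.trans_le hT
  have hsq : √T ^ 2 = T := sq_sqrt hT0.le
  set z := x / √T with hz
  set ζ : ι → ℝ := fun i => ξ i - expect p ξ
  have hdrift : expect p (fun i => valueFn s₁ s₂ ((x + ξ i) / √T)) ≤
      expect p fun i => valueFn s₁ s₂ (z + 1 / √T * ζ i) :=
    expect_le_expect hξ.isDist.1 fun i => (strictMono_valueFn h₁ h₂).monotone <| by
      rw [hz, one_div_mul_eq_div, ← add_div]
      gcongr
      linarith [hξ.expect_nonpos]
  have hζB (i : ι) : |ζ i| ≤ 2 * B := by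
    linarith [abs_sub (ξ i) (expect p ξ), hξ.abs_le i, hξ.isDist.abs_expect_le hξ.abs_le]
  have htaylor := expect_taylor_two_le (hasDerivAt_valueFn h₁ h₂) (hasDerivAt_valueDeriv s₁ s₂) hL
    hξ.isDist hζB (hξ.isDist.expect_sub_expect ξ) z (1 / √T)
  rw [hξ.isDist.variance_sub_const, div_pow, one_pow, hsq, abs_of_pos (by positivity)] at htaylor
  have hhjb : valueDeriv₂ s₁ s₂ z * (1 / T) * variance p ξ / 2 ≤
      -(z * valueDeriv s₁ s₂ z / (2 * T)) := by
    calc _ = variance p ξ * valueDeriv₂ s₁ s₂ z / (2 * T) := by field_simp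
      _ ≤ -(z * valueDeriv s₁ s₂ z) / (2 * T) := by
        gcongr; exact mul_valueDeriv₂_le h₁ h₂ hξ.sq_le_variance hξ.variance_le_sq z
      _ = _ := neg_div _ _
  have htime := sub_mul_deriv_div_le (hasDerivAt_valueFn h₁ h₂) (hasDerivAt_valueDeriv s₁ s₂)
    (abs_mul_valueDeriv_le h₁ h₂) (abs_sq_mul_valueDeriv₂_le h₁ h₂) hT0 x
  have hrem : L * (1 / √T * (2 * B)) ^ 3 = L * (2 * B) ^ 3 / √T ^ 3 := by ring
  rw [add_div]
  linarith [div_sq_le_div_sqrt_pow_three (by positivity : 0 ≤ 12 * exp (1 / 2)) hT]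

theorem valueFn_neg_mul_gcdfInv_of_le_half (h₁ : 0 < s₁) (h₂ : 0 < s₂) {p : ℝ} (h0 : 0 < p)
    (hp : p ≤ 1 / 2) : valueFn s₁ s₂ (-(s₁ * gcdfInv p)) = 1 - 2 * s₁ / (s₁ + s₂) * p := by
  have hgcdf := gcdf_gcdfInv h0 (hp.trans_lt one_half_lt_one)
  have hnonpos : gcdfInv p ≤ 0 := by
    rwa [← strictMono_gcdf.le_iff_le, gcdf_zero, hgcdf]
  rw [valueFn_of_nonneg h₁ h₂ (neg_nonneg.2 (mul_nonpos_of_nonneg_of_nonpos h₁.le hnonpos)),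
    ← mul_neg, mul_div_cancel_left₀ _ h₁.ne', gcdf_neg, hgcdf, sub_sub_cancel]

theorem valueFn_neg_mul_gcdfInv_of_half_le (h₂ : 0 < s₂) {p : ℝ} (h1 : p < 1) (hp : 1 / 2 ≤ p) :
    valueFn s₁ s₂ (-(s₂ * gcdfInv p)) = 2 * s₂ / (s₁ + s₂) * (1 - p) := by
  have hgcdf := gcdf_gcdfInv (one_half_pos.trans_le hp) h1
  have hnonneg : 0 ≤ gcdfInv p := by
    rwa [← strictMono_gcdf.le_iff_le, gcdf_zero, hgcdf]
  rw [valueFn, if_pos (neg_nonpos.2 (mul_nonneg h₂.le hnonneg)), ← mul_neg,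
    mul_div_cancel_left₀ _ h₂.ne', gcdf_neg, hgcdf]

end ValueFunction

/-! ### Feedback rules -/

section Feedback

variable {α β : Type*} {W j : α → β → ℝ} {f : List β → α}

/-- The probability of the output sequence `y` when the inputs are produced by the feedback rule
`f`, which maps the list of past outputs to the next input. -/
def pathProb (W : α → β → ℝ) (f : List β → α) (n : ℕ) (y : Fin n → β) : ℝ :=
  ∏ k : Fin n, W (f ((List.ofFn y).take (k : ℕ))) (y k)

/-- The additive functional with increments `j` along the output sequence `y` when the inputs are
produced by the feedback rule `f`. -/
def pathSum (j : α → β → ℝ) (f : List β → α) (n : ℕ) (y : Fin n → β) : ℝ :=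
  ∑ k : Fin n, j (f ((List.ofFn y).take (k : ℕ))) (y k)

theorem take_ofFn_snoc {n : ℕ} (y : Fin n → β) (b : β) {k : ℕ} (hk : k ≤ n) :
    (List.ofFn (Fin.snoc y b : Fin (n + 1) → β)).take k = (List.ofFn y).take k := by
  rw [List.ofFn_succ', List.concat_eq_append, List.take_append_of_le_length (by simpa using hk)]
  simp only [Fin.snoc_castSucc]

theorem pathProb_snoc (W : α → β → ℝ) (f : List β → α) (n : ℕ) (y : Fin n → β) (b : β) :
    pathProb W f (n + 1) (Fin.snoc y b) = pathProb W f n y * W (f (List.ofFn y)) b := by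
  simp only [pathProb, Fin.prod_univ_castSucc, Fin.val_castSucc, Fin.val_last, Fin.snoc_castSucc,
    Fin.snoc_last, take_ofFn_snoc y b (Fin.is_le _)]
  rw [List.take_of_length_le (by simp)]

theorem pathSum_snoc (j : α → β → ℝ) (f : List β → α) (n : ℕ) (y : Fin n → β) (b : β) :
    pathSum j f (n + 1) (Fin.snoc y b) = pathSum j f n y + j (f (List.ofFn y)) b := by
  simp only [pathSum, Fin.sum_univ_castSucc, Fin.val_castSucc, Fin.val_last, Fin.snoc_castSucc,
    Fin.snoc_last, take_ofFn_snoc y b (Fin.is_le _)]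
  rw [List.take_of_length_le (by simp)]

variable [Fintype β]

theorem expect_pathProb_succ (W : α → β → ℝ) (f : List β → α) {n : ℕ}
    (F : (Fin (n + 1) → β) → ℝ) :
    expect (pathProb W f (n + 1)) F = expect (pathProb W f n) fun y =>
      expect (W (f (List.ofFn y))) fun b => F (Fin.snoc y b) := by
  simp only [expect, Finset.mul_sum, ← mul_assoc, ← pathProb_snoc]
  rw [← (Fin.snocEquiv fun _ => β).sum_comp, Fintype.sum_prod_type, Finset.sum_comm]
  rfl

theorem isDist_pathProb (hW : IsChannel W) (f : List β → α) (n : ℕ) :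
    IsDist (pathProb W f n) := by
  refine ⟨fun y => Finset.prod_nonneg fun _ _ => (hW _).1 _, ?_⟩
  induction n with
  | zero => simp [pathProb]
  | succ n ih =>
    have := expect_pathProb_succ W f (n := n) fun _ => 1
    simp only [(hW _).expect_const] at this
    simpa only [expect, mul_one, ih] using this

/-- The last increment is integrated out first, which moves the horizon from `T` to `T + 1`. -/
theorem expect_valueFn_pathSum_le {s₁ s₂ K a : ℝ} (hW : IsChannel W)
    (hstep : ∀ l x T, 1 ≤ T → expect (W l) (fun b => valueFn s₁ s₂ ((x + j l b) / √T)) ≤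
      valueFn s₁ s₂ (x / √(T + 1)) + K / √T ^ 3) (hK : 0 ≤ K) (f : List β → α) (n : ℕ) :
    ∀ T, 1 ≤ T → expect (pathProb W f n) (fun y => valueFn s₁ s₂ ((a + pathSum j f n y) / √T)) ≤
      valueFn s₁ s₂ (a / √(T + n)) + n * (K / √T ^ 3) := by
  induction n with
  | zero => intro T _; simp [expect, pathProb, pathSum]
  | succ n ih =>
    intro T hT
    have hP := isDist_pathProb hW f n
    calc expect (pathProb W f (n + 1)) (fun y => valueFn s₁ s₂ ((a + pathSum j f (n + 1) y) / √T))
        ≤ expect (pathProb W f n) (fun y =>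
            valueFn s₁ s₂ ((a + pathSum j f n y) / √(T + 1)) + K / √T ^ 3) := by
          rw [expect_pathProb_succ]
          simp only [pathSum_snoc, ← add_assoc]
          exact expect_le_expect hP.1 fun y => hstep _ _ T hT
      _ ≤ valueFn s₁ s₂ (a / √(T + 1 + n)) + n * (K / √(T + 1) ^ 3) + K / √T ^ 3 := by
          rw [expect_add, hP.expect_const]
          exact add_le_add_left (ih (T + 1) (by linarith)) _
      _ ≤ valueFn s₁ s₂ (a / √(T + (n + 1 : ℕ))) + (n + 1 : ℕ) * (K / √T ^ 3) := by
          have hmono : n * (K / √(T + 1) ^ 3) ≤ n * (K / √T ^ 3) := by gcongr; linarith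
          push_cast
          rw [show T + (n + 1 : ℝ) = T + 1 + n by ring]
          linarith

theorem prob_lt_pathSum_mul_valueFn_le {s₁ s₂ K T θ : ℝ} {n : ℕ} (hW : IsChannel W)
    (h₁ : 0 < s₁) (h₂ : 0 < s₂) (b : ℝ) (hT : 0 < T)
    (h : ∀ a, expect (pathProb W f n) (fun y => valueFn s₁ s₂ ((a + pathSum j f n y) / √T)) ≤
      valueFn s₁ s₂ (a / √(T + n)) + K) :
    valueFn s₁ s₂ b * prob (pathProb W f n) {y | θ < pathSum j f n y} ≤
      valueFn s₁ s₂ ((b * √T - θ) / √(T + n)) + K := by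
  refine (mul_prob_le_expect (isDist_pathProb hW f n).1 (fun y => (valueFn_pos h₁ h₂ _).le)
    fun y (hy : θ < pathSum j f n y) => (strictMono_valueFn h₁ h₂).monotone ?_).trans
    (h (b * √T - θ))
  rw [le_div_iff₀ (Real.sqrt_pos.2 hT)]
  linarith

theorem exists_valueFn_div_sqrt_lt {s₁ s₂ r p : ℝ} (h₁ : 0 < s₁) (h₂ : 0 < s₂)
    (hr : valueFn s₁ s₂ (-r) < p) :
    ∃ b δ, 0 < δ ∧ valueFn s₁ s₂ ((b * √δ - r) / √(1 + δ)) < valueFn s₁ s₂ b * p := by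
  obtain ⟨b, hb⟩ : ∃ b, valueFn s₁ s₂ (-r) < valueFn s₁ s₂ b * p := by
    have := (tendsto_valueFn_atTop h₁ h₂).mul_const p
    rw [one_mul] at this
    exact (this.eventually (lt_mem_nhds hr)).exists
  have hcont : ContinuousAt (fun δ => valueFn s₁ s₂ ((b * √δ - r) / √(1 + δ))) 0 :=
    (continuous_valueFn h₁ h₂).continuousAt.comp
      (ContinuousAt.div (by fun_prop) (by fun_prop) (by simp))
  have hev : ∀ᶠ δ in nhdsWithin (0 : ℝ) (Ioi 0),
      valueFn s₁ s₂ ((b * √δ - r) / √(1 + δ)) < valueFn s₁ s₂ b * p :=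
    (hcont.eventually (gt_mem_nhds (by simpa using hb))).filter_mono nhdsWithin_le_nhds
  obtain ⟨δ, hδ, hδ0⟩ := (hev.and self_mem_nhdsWithin).exists
  exact ⟨b, δ, hδ0, hδ⟩

theorem tendsto_sqrt_natCast_atTop : Tendsto (fun n : ℕ => √(n : ℝ)) atTop atTop :=
  Real.tendsto_sqrt_atTop.comp tendsto_natCast_atTop_atTop

theorem eventually_prob_lt_pathSum_le {s₁ s₂ B r p : ℝ} (hW : IsChannel W) (h₁ : 0 < s₁)
    (h₂ : 0 < s₂) (hB : 0 ≤ B) (hj : ∀ x, IsAdmissible s₁ s₂ B (W x) (j x))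
    (hr : valueFn s₁ s₂ (-r) < p) :
    ∀ᶠ n : ℕ in atTop, ∀ f, prob (pathProb W f n) {y | r * √n < pathSum j f n y} ≤ p := by
  obtain ⟨K, hK, hstep⟩ := exists_expect_valueFn_step_le (ι := β) h₁ h₂ hB
  obtain ⟨b, δ, hδ0, hδ⟩ := exists_valueFn_div_sqrt_lt h₁ h₂ hr
  set v := valueFn s₁ s₂ ((b * √δ - r) / √(1 + δ))
  have herror : ∀ᶠ n : ℕ in atTop, v + K / √δ ^ 3 * (√n)⁻¹ < valueFn s₁ s₂ b * p := by
    have : Tendsto (fun n : ℕ => v + K / √δ ^ 3 * (√n)⁻¹) atTop (nhds v) := by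
      simpa using ((tendsto_inv_atTop_zero.comp tendsto_sqrt_natCast_atTop).const_mul
        (K / √δ ^ 3)).const_add v
    exact this.eventually (gt_mem_nhds hδ)
  have hhorizon : ∀ᶠ n : ℕ in atTop, 1 ≤ δ * n :=
    (tendsto_natCast_atTop_atTop.const_mul_atTop hδ0).eventually_ge_atTop 1
  filter_upwards [herror, hhorizon, eventually_gt_atTop 0] with n hlt hT hn f
  have hn0 : (0 : ℝ) < n := Nat.cast_pos.2 hn
  have : 0 < √(n : ℝ) := Real.sqrt_pos.2 hn0
  have : 0 < √δ := Real.sqrt_pos.2 hδ0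
  have hscale : (b * √(δ * n) - r * √n) / √(δ * n + n) = (b * √δ - r) / √(1 + δ) := by
    have : 0 < √(1 + δ) := Real.sqrt_pos.2 (by linarith)
    rw [show δ * n + n = (1 + δ) * n by ring, Real.sqrt_mul hδ0.le, Real.sqrt_mul (by linarith)]
    field_simp
  have hcubic : n * (K / √(δ * n) ^ 3) = K / √δ ^ 3 * (√n)⁻¹ := by
    rw [Real.sqrt_mul hδ0.le]
    nth_rewrite 1 [← Real.sq_sqrt hn0.le]
    field_simp
  have htail := prob_lt_pathSum_mul_valueFn_le (f := f) (θ := r * √n) hW h₁ h₂ b (by linarith)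
    fun a => expect_valueFn_pathSum_le (a := a) hW (fun x => hstep _ _ (hj x)) hK f n (δ * n) hT
  rw [hscale, hcubic] at htail
  exact le_of_mul_le_mul_left (htail.trans hlt.le) (valueFn_pos h₁ h₂ b)

theorem expect_sq_pathSum_le (hW : IsChannel W) {v : ℝ}
    (hmean : ∀ l, expect (W (f l)) (j (f l)) = 0)
    (hsq : ∀ l, expect (W (f l)) (fun b => j (f l) b ^ 2) ≤ v) (n : ℕ) :
    expect (pathProb W f n) (fun y => pathSum j f n y ^ 2) ≤ n * v := by
  induction n with
  | zero => simp [expect, pathSum]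
  | succ n ih =>
    have hP := isDist_pathProb hW f n
    have hstep : ∀ y, expect (W (f (List.ofFn y)))
        (fun b => (pathSum j f n y + j (f (List.ofFn y)) b) ^ 2) ≤ pathSum j f n y ^ 2 + v := by
      intro y
      simp only [add_sq, expect_add, expect_const_mul, hmean, (hW _).expect_const]
      linarith [hsq (List.ofFn y)]
    calc expect (pathProb W f (n + 1)) (fun y => pathSum j f (n + 1) y ^ 2)
        ≤ expect (pathProb W f n) (fun y => pathSum j f n y ^ 2 + v) := by
          rw [expect_pathProb_succ]
          simp only [pathSum_snoc]
          exact expect_le_expect hP.1 hstep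
      _ ≤ (n + 1 : ℕ) * v := by
          rw [expect_add, hP.expect_const]
          push_cast
          linarith

theorem prob_pathSum_le_neg_le (hW : IsChannel W) {v θ : ℝ} (hθ : 0 < θ)
    (hmean : ∀ l, expect (W (f l)) (j (f l)) = 0)
    (hsq : ∀ l, expect (W (f l)) (fun b => j (f l) b ^ 2) ≤ v) (n : ℕ) :
    prob (pathProb W f n) {y | pathSum j f n y ≤ -θ} ≤ n * v / θ ^ 2 := by
  rw [le_div_iff₀' (pow_pos hθ 2)]
  refine (mul_prob_le_expect (isDist_pathProb hW f n).1 (fun y => sq_nonneg _)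
    fun y (hy : pathSum j f n y ≤ -θ) => ?_).trans (expect_sq_pathSum_le hW hmean hsq n)
  rw [← neg_sq (pathSum j f n y)]
  gcongr
  linarith

end Feedback

/-! ### The capacity-achieving output distribution -/

section Capacity

section Divergence

variable {ι : Type*} [Fintype ι] {p q : ι → ℝ}

/-- The relative entropy `D(p‖q)` in nats; terms with `p i = 0` vanish, and the values are only
meaningful when `p i = 0` wherever `q i = 0`. -/
def divergence (p q : ι → ℝ) : ℝ := expect p fun i => Real.log (p i / q i)

theorem sub_le_mul_log_div {a b : ℝ} (ha : 0 ≤ a) (hb : 0 ≤ b) (hab : b = 0 → a = 0) :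
    a - b ≤ a * Real.log (a / b) := by
  rcases ha.eq_or_lt with rfl | ha
  · simpa using hb
  have hb' : 0 < b := lt_of_le_of_ne hb fun h => ha.ne' (hab h.symm)
  calc a - b = a * (1 - (a / b)⁻¹) := by field_simp
    _ ≤ a * Real.log (a / b) :=
      mul_le_mul_of_nonneg_left (Real.one_sub_inv_le_log_of_pos (div_pos ha hb')) ha.le

theorem mul_log_div_sub_add_le_divergence (hp : IsDist p) (hq : IsDist q)
    (hac : ∀ i, q i = 0 → p i = 0) (i : ι) :
    p i * Real.log (p i / q i) - p i + q i ≤ divergence p q :=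
  calc p i * Real.log (p i / q i) - p i + q i
      ≤ ∑ i, (p i * Real.log (p i / q i) - p i + q i) :=
        Finset.single_le_sum (f := fun i => p i * Real.log (p i / q i) - p i + q i)
          (fun i _ => by linarith [sub_le_mul_log_div (hp.1 i) (hq.1 i) (hac i)])
          (Finset.mem_univ i)
    _ = divergence p q := by
        rw [Finset.sum_add_distrib, Finset.sum_sub_distrib, hp.2, hq.2, sub_add_cancel]
        rfl

theorem divergence_nonneg (hp : IsDist p) (hq : IsDist q) (hac : ∀ i, q i = 0 → p i = 0) :
    0 ≤ divergence p q := by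
  obtain ⟨i, -⟩ := hp.exists_pos
  linarith [mul_log_div_sub_add_le_divergence hp hq hac i,
    sub_le_mul_log_div (hp.1 i) (hq.1 i) (hac i)]

theorem continuous_divergence_one : Continuous fun p : ι → ℝ => divergence p 1 := by
  simp only [divergence, expect, Pi.one_apply, div_one]
  exact continuous_finsetSum _ fun i _ => Real.continuous_mul_log.comp (continuous_apply i)

theorem isDist_single (i : ι) : IsDist (Pi.single i 1 : ι → ℝ) :=
  ⟨fun j => (Pi.single_nonneg.2 zero_le_one : (0 : ι → ℝ) ≤ Pi.single i 1) j,
    Finset.sum_pi_single' _ _ _ |>.trans (by simp)⟩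

theorem IsDist.mix (hp : IsDist p) (hq : IsDist q) {t : ℝ} (h0 : 0 ≤ t) (h1 : t ≤ 1) :
    IsDist fun i => (1 - t) * p i + t * q i := by
  refine ⟨fun i => add_nonneg (mul_nonneg (by linarith) (hp.1 i)) (mul_nonneg h0 (hq.1 i)), ?_⟩
  rw [Finset.sum_add_distrib, ← Finset.mul_sum, ← Finset.mul_sum, hp.2, hq.2]
  ring

theorem expect_mix_single (p ξ : ι → ℝ) (i : ι) (t : ℝ) :
    expect (fun j => (1 - t) * p j + t * (Pi.single i 1 : ι → ℝ) j) ξ =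
      (1 - t) * expect p ξ + t * ξ i := by
  simp only [expect, add_mul, Finset.sum_add_distrib, mul_assoc, ← Finset.mul_sum]
  simp [Pi.single_apply]

end Divergence

variable {P : X → ℝ} {W : X → Y → ℝ}

theorem isDist_outDist (hW : IsChannel W) (hP : IsDist P) : IsDist (outDist P W) := by
  refine ⟨fun y => Finset.sum_nonneg fun x _ => mul_nonneg (hP.1 x) ((hW x).1 y), ?_⟩
  unfold outDist
  rw [Finset.sum_comm]
  simp only [← Finset.mul_sum, (hW _).2, mul_one, hP.2]

theorem mul_eq_zero_of_outDist_eq_zero (hW : IsChannel W) (hP : IsDist P) {x : X} {y : Y}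
    (h : outDist P W y = 0) : P x * W x y = 0 :=
  (Finset.sum_eq_zero_iff_of_nonneg fun x _ => mul_nonneg (hP.1 x) ((hW x).1 y)).1 h x
    (Finset.mem_univ x)

theorem mutInfo_eq_expect_divergence (P : X → ℝ) (W : X → Y → ℝ) :
    mutInfo P W = expect P fun x => divergence (W x) (outDist P W) := by
  simp only [mutInfo, expect, divergence, Finset.mul_sum, mul_assoc]

theorem expect_divergence_eq (hW : IsChannel W) (hP : IsDist P) {r : Y → ℝ}
    (hr : ∀ y, r y = 0 → outDist P W y = 0) :
    expect P (fun x => divergence (W x) r) = mutInfo P W + divergence (outDist P W) r := by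
  have hterm : ∀ x y, P x * (W x y * Real.log (W x y / r y)) =
      P x * W x y * Real.log (W x y / outDist P W y) +
        P x * W x y * Real.log (outDist P W y / r y) := by
    intro x y
    by_cases h : P x * W x y = 0
    · rw [h, ← mul_assoc, h]; ring
    have hw : W x y ≠ 0 := right_ne_zero_of_mul h
    have hq : outDist P W y ≠ 0 := fun hq => h (mul_eq_zero_of_outDist_eq_zero hW hP hq)
    have hry : r y ≠ 0 := fun hry => hq (hr y hry)
    rw [Real.log_div hw hry, Real.log_div hw hq, Real.log_div hq hry]
    ring
  simp only [mutInfo, expect, divergence, Finset.mul_sum, hterm, Finset.sum_add_distrib]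
  congr 1
  rw [Finset.sum_comm]
  simp only [← Finset.sum_mul]
  rfl

theorem continuousOn_mutInfo (hW : IsChannel W) :
    ContinuousOn (fun P => mutInfo P W) (stdSimplex ℝ X) := by
  have hcont : Continuous fun P : X → ℝ =>
      expect P (fun x => divergence (W x) 1) - divergence (outDist P W) 1 :=
    (continuous_finsetSum _ fun x _ => (continuous_apply x).mul continuous_const).sub
      (continuous_divergence_one.comp (by unfold outDist; fun_prop))
  refine hcont.continuousOn.congr fun P hP => ?_
  exact eq_sub_of_add_eq (expect_divergence_eq hW hP fun y h => absurd h one_ne_zero).symm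

theorem bddAbove_mutInfo (hW : IsChannel W) : BddAbove {c | ∃ P, IsDist P ∧ mutInfo P W = c} :=
  (isCompact_stdSimplex ℝ X).bddAbove_image (continuousOn_mutInfo hW)

theorem capacityAchievers_nonempty [Nonempty X] (hW : IsChannel W) :
    (capacityAchievers W).Nonempty := by
  obtain ⟨P, hP, hmax⟩ := (isCompact_stdSimplex ℝ X).exists_isMaxOn
    ⟨_, isDist_single (Classical.arbitrary X)⟩ (continuousOn_mutInfo hW)
  refine ⟨P, hP, le_antisymm (le_csSup (bddAbove_mutInfo hW) ⟨P, hP, rfl⟩) ?_⟩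
  refine csSup_le ⟨_, P, hP, rfl⟩ ?_
  rintro c ⟨Q, hQ, rfl⟩
  exact hmax hQ

theorem exists_qStar_eq_outDist [Nonempty X] (hW : IsChannel W) :
    ∃ P ∈ capacityAchievers W, qStar W = outDist P W :=
  have hne := capacityAchievers_nonempty hW
  ⟨hne.choose, hne.choose_spec, dif_pos hne⟩

theorem mix_eq_zero_iff {a b t : ℝ} (ha : 0 ≤ a) (hb : 0 ≤ b) (h0 : 0 < t) (h1 : t < 1) :
    (1 - t) * a + t * b = 0 ↔ a = 0 ∧ b = 0 := by
  have h1' : 0 < 1 - t := by linarith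
  rw [add_eq_zero_iff_of_nonneg (by positivity) (by positivity), mul_eq_zero_iff_left h1'.ne',
    mul_eq_zero_iff_left h0.ne']

/-- Moving a capacity-achieving input distribution slightly towards the input `x` does not increase
the mutual information. -/
theorem divergence_mix_le_capacity (hW : IsChannel W) (hP : P ∈ capacityAchievers W) (x : X)
    {t : ℝ} (h0 : 0 < t) (h1 : t < 1) :
    divergence (W x) (fun y => (1 - t) * outDist P W y + t * W x y) ≤ capacity W := by
  obtain ⟨hP, hPC⟩ := hP
  have hmix := hP.mix (isDist_single x) h0.le h1.le
  have hq := isDist_outDist hW hP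
  have hout : outDist (fun a => (1 - t) * P a + t * (Pi.single x 1 : X → ℝ) a) W =
      fun y => (1 - t) * outDist P W y + t * W x y :=
    funext fun y => expect_mix_single P (fun a => W a y) x t
  have hqt : IsDist fun y => (1 - t) * outDist P W y + t * W x y := hq.mix (hW x) h0.le h1.le
  have hac : ∀ y, (1 - t) * outDist P W y + t * W x y = 0 → outDist P W y = 0 :=
    fun y h => ((mix_eq_zero_iff (hq.1 y) ((hW x).1 y) h0 h1).1 h).1
  have hle := le_csSup (bddAbove_mutInfo hW) ⟨_, hmix, rfl⟩
  rw [mutInfo_eq_expect_divergence, hout, expect_mix_single, expect_divergence_eq hW hP hac,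
    hPC] at hle
  change (1 - t) * (capacity W + _) + t * _ ≤ capacity W at hle
  have hpos := mul_nonneg (sub_nonneg.2 h1.le) (divergence_nonneg hq hqt hac)
  refine le_of_mul_le_mul_left ?_ h0
  linarith

theorem outDist_pos (hW : IsChannel W) (hP : P ∈ capacityAchievers W) {x : X} {y : Y}
    (hxy : 0 < W x y) : 0 < outDist P W y := by
  have hq := isDist_outDist hW hP.1
  refine (hq.1 y).lt_of_ne' fun hy => ?_
  have hbound : ∀ t ∈ Ioo (0 : ℝ) 1, W x y * (-Real.log t) ≤ capacity W + W x y := by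
    intro t ht
    have hle := (mul_log_div_sub_add_le_divergence (hW x) (hq.mix (hW x) ht.1.le ht.2.le)
      (fun y h => ((mix_eq_zero_iff (hq.1 y) ((hW x).1 y) ht.1 ht.2).1 h).2) y).trans
      (divergence_mix_le_capacity hW hP x ht.1 ht.2)
    rw [hy, mul_zero, zero_add, div_mul_cancel_right₀ hxy.ne', Real.log_inv] at hle
    linarith [mul_pos ht.1 hxy]
  have hlim : Tendsto (fun t => W x y * (-Real.log t)) (nhdsWithin 0 (Ioi 0)) atTop :=
    (tendsto_neg_atBot_atTop.comp Real.tendsto_log_nhdsGT_zero).const_mul_atTop hxy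
  obtain ⟨t, hlt, ht⟩ := ((hlim.eventually_gt_atTop _).and
    (Ioo_mem_nhdsGT (zero_lt_one' ℝ))).exists
  exact (hbound t ht).not_gt hlt

theorem divergence_outDist_le_capacity (hW : IsChannel W) (hP : P ∈ capacityAchievers W) (x : X) :
    divergence (W x) (outDist P W) ≤ capacity W := by
  have hlim : Tendsto (fun t : ℝ => divergence (W x) fun y => (1 - t) * outDist P W y + t * W x y)
      (nhdsWithin 0 (Ioi 0)) (nhds (divergence (W x) (outDist P W))) := by
    refine tendsto_finsetSum _ fun y _ => ?_
    rcases ((hW x).1 y).eq_or_lt with hy | hy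
    · simp [← hy]
    have hq := outDist_pos hW hP hy
    have hcont : ContinuousAt (fun t : ℝ => W x y *
        Real.log (W x y / ((1 - t) * outDist P W y + t * W x y))) 0 := by
      refine continuousAt_const.mul (ContinuousAt.log ?_ ?_)
      · exact continuousAt_const.div (by fun_prop) (by simpa using hq.ne')
      · simpa using ⟨hy.ne', hq.ne'⟩
    simpa using hcont.tendsto.mono_left nhdsWithin_le_nhds
  refine le_of_tendsto hlim ?_
  filter_upwards [Ioo_mem_nhdsGT (zero_lt_one' ℝ)] with t ht
  exact divergence_mix_le_capacity hW hP x ht.1 ht.2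

theorem divergence_outDist_eq_capacity (hW : IsChannel W) (hP : P ∈ capacityAchievers W) {x : X}
    (hx : 0 < P x) : divergence (W x) (outDist P W) = capacity W := by
  have hD := divergence_outDist_le_capacity hW hP
  refine (hD x).antisymm (not_lt.1 fun hlt => ?_)
  have hsum : expect P (fun x => divergence (W x) (outDist P W)) < expect P fun _ => capacity W :=
    Finset.sum_lt_sum (fun x _ => mul_le_mul_of_nonneg_left (hD x) (hP.1.1 x))
      ⟨x, Finset.mem_univ x, mul_lt_mul_of_pos_left hlt hx⟩
  rw [← mutInfo_eq_expect_divergence, hP.1.expect_const, hP.2] at hsum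
  exact lt_irrefl _ hsum

end Capacity

/-! ### The converse bound -/

section Converse

section HypothesisTesting

variable {ι κ : Type*} [Fintype ι] [Fintype κ] {p q : ι → ℝ} {γ : ℝ}

theorem IsDist.sum_prob_fiber (hq : IsDist q) (g : ι → κ) : ∑ m, prob q {i | g i = m} = 1 := by
  simp only [prob]
  rw [Finset.sum_comm, ← hq.2]
  simp only [indicator_apply, mem_ofPred_eq, Finset.sum_ite_eq, Finset.mem_univ, if_true]

theorem prob_le_prob_lt_add_mul_prob (hp : ∀ i, 0 ≤ p i) (hq : ∀ i, 0 ≤ q i) (hγ : 0 ≤ γ)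
    (s : Set ι) : prob p s ≤ prob p {i | γ * q i < p i} + γ * prob q s := by
  simp only [prob, Finset.mul_sum, ← Finset.sum_add_distrib, indicator_apply, mem_ofPred_eq]
  refine Finset.sum_le_sum fun i _ => ?_
  have := mul_nonneg hγ (hq i)
  have := hp i
  split_ifs <;> linarith

/-- The Verdú–Han converse, for an arbitrary reference distribution `q`. -/
theorem card_mul_sub_le_sum_prob_ne {V : κ → ι → ℝ} {a : ℝ} (hV : ∀ m, IsDist (V m))
    (hq : IsDist q) (hγ : 0 ≤ γ) (ha : ∀ m, prob (V m) {i | γ * q i < V m i} ≤ a) (g : ι → κ) :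
    Fintype.card κ * (1 - a) - γ ≤ ∑ m, prob (V m) {i | g i ≠ m} := by
  have hm : ∀ m, 1 - a - γ * prob q {i | g i = m} ≤ prob (V m) {i | g i ≠ m} := fun m => by
    have hle := prob_le_prob_lt_add_mul_prob (hV m).1 hq.1 hγ {i | g i = m}
    have hcompl : prob (V m) {i | g i ≠ m} = 1 - prob (V m) {i | g i = m} :=
      (hV m).prob_compl {i | g i = m}
    linarith [ha m]
  calc Fintype.card κ * (1 - a) - γ = ∑ m, (1 - a - γ * prob q {i | g i = m}) := by
        rw [Finset.sum_sub_distrib, ← Finset.mul_sum, hq.sum_prob_fiber, Finset.sum_const,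
          Finset.card_univ, nsmul_eq_mul, mul_one]
    _ ≤ ∑ m, prob (V m) {i | g i ≠ m} := Finset.sum_le_sum fun m _ => hm m

theorem IsDist.pi (hp : IsDist p) (n : ℕ) : IsDist fun c : Fin n → ι => ∏ k, p (c k) := by
  refine ⟨fun c => Finset.prod_nonneg fun k _ => hp.1 _, ?_⟩
  rw [← Fintype.piFinset_univ, ← Finset.prod_univ_sum]
  simp only [hp.2, Finset.prod_const_one]

end HypothesisTesting

section ErrorProbability

variable {α β : Type*} [Fintype β] {W : α → β → ℝ}

theorem errProb_eq_sum_prob (W : α → β → ℝ) (n M : ℕ) (enc : Fin M → List β → α)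
    (dec : (Fin n → β) → Fin M) :
    errProb W n M enc dec = (M : ℝ)⁻¹ * ∑ m, prob (pathProb W (enc m) n) {y | dec y ≠ m} := by
  simp only [errProb, prob, indicator_apply, mem_ofPred_eq, ite_not, mul_ite, mul_zero, mul_one]
  rfl

theorem minErr_le_errProb (hW : IsChannel W) (n : ℕ) (R : ℝ)
    (enc : Fin ⌈Real.exp (n * R)⌉₊ → List β → α) (dec : (Fin n → β) → Fin ⌈Real.exp (n * R)⌉₊) :
    minErr W n R ≤ errProb W n ⌈Real.exp (n * R)⌉₊ enc dec := by
  refine csInf_le ⟨0, ?_⟩ ⟨enc, dec, rfl⟩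
  rintro e ⟨enc, dec, rfl⟩
  rw [errProb_eq_sum_prob]
  exact mul_nonneg (by positivity) (Finset.sum_nonneg fun m _ =>
    prob_nonneg (isDist_pathProb hW (enc m) n).1 _)

theorem natCeil_exp_pos (a : ℝ) : 0 < ⌈Real.exp a⌉₊ := Nat.ceil_pos.2 (Real.exp_pos a)

theorem le_minErr [Nonempty α] {n : ℕ} {R e : ℝ}
    (h : ∀ enc dec, e ≤ errProb W n ⌈Real.exp (n * R)⌉₊ enc dec) : e ≤ minErr W n R := by
  refine le_csInf ⟨_, fun _ _ => Classical.arbitrary α, fun _ => ⟨0, natCeil_exp_pos _⟩, rfl⟩ ?_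
  rintro _ ⟨enc, dec, rfl⟩
  exact h enc dec

end ErrorProbability

variable {W : X → Y → ℝ} {f : List Y → X} {n : ℕ}

/-- The information density `i*(x,y)` centered at capacity. -/
def centeredDensity (W : X → Y → ℝ) (x : X) (y : Y) : ℝ := iStar W x y - capacity W

theorem isDist_qStar [Nonempty X] (hW : IsChannel W) : IsDist (qStar W) := by
  obtain ⟨P, hP, hq⟩ := exists_qStar_eq_outDist hW
  exact hq ▸ isDist_outDist hW hP.1

theorem qStar_pos (hW : IsChannel W) {x : X} {y : Y} (hxy : 0 < W x y) : 0 < qStar W y := by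
  have : Nonempty X := ⟨x⟩
  obtain ⟨P, hP, hq⟩ := exists_qStar_eq_outDist hW
  exact hq ▸ outDist_pos hW hP hxy

theorem expect_centeredDensity (hW : IsChannel W) (x : X) :
    expect (W x) (centeredDensity W x) = divergence (W x) (qStar W) - capacity W := by
  unfold centeredDensity
  rw [expect_sub, (hW x).expect_const]
  rfl

theorem expect_centeredDensity_nonpos (hW : IsChannel W) (x : X) :
    expect (W x) (centeredDensity W x) ≤ 0 := by
  have : Nonempty X := ⟨x⟩
  obtain ⟨P, hP, hq⟩ := exists_qStar_eq_outDist hW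
  rw [expect_centeredDensity hW, hq, sub_nonpos]
  exact divergence_outDist_le_capacity hW hP x

theorem variance_centeredDensity (hW : IsChannel W) (x : X) :
    variance (W x) (centeredDensity W x) = nu W x :=
  (hW x).variance_sub_const (iStar W x) (capacity W)

theorem nu_le_numax [Nonempty X] (W : X → Y → ℝ) (x : X) : nu W x ≤ numax W :=
  le_ciSup (Finite.bddAbove_range (nu W)) x

theorem numin_le_nu [Nonempty X] (W : X → Y → ℝ) (x : X) : numin W ≤ nu W x :=
  ciInf_le (Finite.bddBelow_range (nu W)) x

theorem numax_pos [Nonempty X] (hν : 0 < numin W) : 0 < numax W :=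
  hν.trans_le ((numin_le_nu W (Classical.arbitrary X)).trans (nu_le_numax W _))

theorem exists_abs_centeredDensity_le (W : X → Y → ℝ) :
    ∃ B, 0 ≤ B ∧ ∀ x y, |centeredDensity W x y| ≤ B := by
  obtain ⟨B, hB⟩ := Finite.bddAbove_range fun z : X × Y => |centeredDensity W z.1 z.2|
  exact ⟨max B 0, le_max_right _ _, fun x y => le_max_of_le_left (hB ⟨(x, y), rfl⟩)⟩

theorem isAdmissible_centeredDensity [Nonempty X] (hW : IsChannel W) (hν : 0 ≤ numin W) {B : ℝ}
    (hB : ∀ x y, |centeredDensity W x y| ≤ B) (x : X) :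
    IsAdmissible (√(numin W)) (√(numax W)) B (W x) (centeredDensity W x) where
  isDist := hW x
  abs_le := hB x
  expect_nonpos := expect_centeredDensity_nonpos hW x
  sq_le_variance := by
    rw [Real.sq_sqrt hν, variance_centeredDensity hW]
    exact numin_le_nu W x
  variance_le_sq := by
    rw [Real.sq_sqrt (hν.trans ((numin_le_nu W x).trans (nu_le_numax W x))),
      variance_centeredDensity hW]
    exact nu_le_numax W x

theorem pathProb_eq_exp_mul (hW : IsChannel W) {y : Fin n → Y} (hy : pathProb W f n y ≠ 0) :
    pathProb W f n y = Real.exp (pathSum (centeredDensity W) f n y + n * capacity W) *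
      ∏ k, qStar W (y k) := by
  have hsum : pathSum (centeredDensity W) f n y + n * capacity W =
      ∑ k : Fin n, iStar W (f ((List.ofFn y).take (k : ℕ))) (y k) := by
    simp only [pathSum, centeredDensity, Finset.sum_sub_distrib, Finset.sum_const,
      Finset.card_univ, Fintype.card_fin, nsmul_eq_mul, sub_add_cancel]
  rw [hsum, Real.exp_sum, ← Finset.prod_mul_distrib]
  refine Finset.prod_congr rfl fun k _ => ?_
  have hk : 0 < W (f ((List.ofFn y).take (k : ℕ))) (y k) :=
    ((hW _).1 _).lt_of_ne' (Finset.prod_ne_zero_iff.1 hy k (Finset.mem_univ k))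
  have hq := qStar_pos hW hk
  rw [iStar, Real.exp_log (div_pos hk hq), div_mul_cancel₀ _ hq.ne']

theorem lt_pathSum_of_exp_mul_lt (hW : IsChannel W) {θ : ℝ} {y : Fin n → Y}
    (h : Real.exp (θ + n * capacity W) * ∏ k, qStar W (y k) < pathProb W f n y) :
    θ < pathSum (centeredDensity W) f n y := by
  have : Nonempty X := ⟨f []⟩
  have hQ : 0 ≤ ∏ k, qStar W (y k) := ((isDist_qStar hW).pi n).1 y
  have hy : 0 < pathProb W f n y := (mul_nonneg (Real.exp_pos _).le hQ).trans_lt h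
  rw [pathProb_eq_exp_mul hW hy.ne'] at h
  linarith [Real.exp_lt_exp.1 (lt_of_mul_lt_mul_right h hQ)]

theorem natCeil_exp_mul_le [Nonempty X] (hW : IsChannel W) {R ε θ p : ℝ}
    (hp : ∀ f, prob (pathProb W f n) {y | θ < pathSum (centeredDensity W) f n y} ≤ p)
    (hR : minErr W n R ≤ ε) :
    (⌈Real.exp (n * R)⌉₊ : ℝ) * (1 - ε - p) ≤ Real.exp (θ + n * capacity W) := by
  set M := ⌈Real.exp (n * R)⌉₊
  have hM : (0 : ℝ) < M := Nat.cast_pos.2 (natCeil_exp_pos _)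
  set γ := Real.exp (θ + n * capacity W)
  have hcode : ∀ enc dec, 1 - p - γ / M ≤ errProb W n M enc dec := by
    intro enc dec
    have hVH := card_mul_sub_le_sum_prob_ne (fun m => isDist_pathProb hW (enc m) n)
      ((isDist_qStar hW).pi n) (Real.exp_pos (θ + n * capacity W)).le
      (fun m => (prob_mono (isDist_pathProb hW (enc m) n).1 fun y hy =>
        lt_pathSum_of_exp_mul_lt hW hy).trans (hp (enc m))) dec
    rw [Fintype.card_fin] at hVH
    rw [errProb_eq_sum_prob, ← div_eq_inv_mul, le_div_iff₀ hM, sub_mul, div_mul_cancel₀ _ hM.ne',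
      mul_comm]
    exact hVH
  have hle : 1 - ε - p ≤ γ / M := by linarith [(le_minErr hcode).trans hR]
  rwa [le_div_iff₀' hM] at hle

theorem bddAbove_code_sizes [Nonempty X] (hW : IsChannel W) (n : ℕ) {ε : ℝ} (hε : ε < 1) :
    BddAbove {m : ℝ | ∃ R : ℝ, m = (⌈Real.exp (n * R)⌉₊ : ℝ) ∧ minErr W n R ≤ ε} := by
  obtain ⟨B, -, hB⟩ := exists_abs_centeredDensity_le W
  have htail : ∀ f, prob (pathProb W f n) {y | n * B < pathSum (centeredDensity W) f n y} ≤ 0 := by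
    intro f
    have hempty : {y | n * B < pathSum (centeredDensity W) f n y} = ∅ := by
      refine eq_empty_of_forall_notMem fun y => ?_
      rw [mem_ofPred_eq, not_lt, pathSum]
      exact (Finset.sum_le_card_nsmul _ _ B fun k _ => (le_abs_self _).trans (hB _ _)).trans_eq
        (by rw [Finset.card_univ, Fintype.card_fin, nsmul_eq_mul])
    simp only [hempty, prob, indicator_empty, Finset.sum_const_zero, le_refl]
  refine ⟨Real.exp (n * B + n * capacity W) / (1 - ε), ?_⟩
  rintro m ⟨R, rfl, hR⟩
  rw [le_div_iff₀ (sub_pos.2 hε), ← sub_zero (1 - ε)]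
  exact natCeil_exp_mul_le hW htail hR

theorem Mfb_le [Nonempty X] (hW : IsChannel W) {ε θ p : ℝ}
    (hp : ∀ f, prob (pathProb W f n) {y | θ < pathSum (centeredDensity W) f n y} ≤ p)
    (hpε : p < 1 - ε) : Mfb W n ε ≤ Real.exp (θ + n * capacity W) / (1 - ε - p) := by
  refine Real.sSup_le ?_ (div_nonneg (Real.exp_pos _).le (sub_nonneg.2 hpε.le))
  rintro m ⟨R, rfl, hR⟩
  rw [le_div_iff₀ (sub_pos.2 hpε)]
  exact natCeil_exp_mul_le hW hp hR

end Converse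

/-! ### The achievability bound -/

section Achievability

section Feinstein

variable {A B : Type*} [Fintype B] {V : A → B → ℝ} {P : A → ℝ} {γ e : ℝ}

theorem prob_outDist [Fintype A] (P : A → ℝ) (V : A → B → ℝ) (s : Set B) :
    prob (outDist P V) s = expect P fun a => prob (V a) s := by
  simp only [prob, expect, outDist, indicator_apply, Finset.mul_sum]
  rw [Finset.sum_comm]
  refine Finset.sum_congr rfl fun b _ => ?_
  split_ifs
  · rfl
  · simp only [mul_zero, Finset.sum_const_zero]

/-- A partial code: codewords `c i` for the labels `i < M` with decoder `d`, where `d b ≥ M` means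
that `b` is not decoded. Outputs are decoded to `c i` only if their likelihood under `c i` is at
least `γ` times their probability under `q`, and each codeword is decoded correctly with probability
at least `1 - ε`. -/
structure IsThresholdCode (V : A → B → ℝ) (q : B → ℝ) (γ ε : ℝ) (M : ℕ) (c : ℕ → A)
    (d : B → ℕ) : Prop where
  le_prob : ∀ i < M, 1 - ε ≤ prob (V (c i)) {b | d b = i}
  mul_le : ∀ b, d b < M → γ * q b ≤ V (c (d b)) b

variable {q : B → ℝ} {ε : ℝ} {M : ℕ} {c : ℕ → A} {d : B → ℕ}

theorem IsThresholdCode.prob_lt_le (h : IsThresholdCode V q γ ε M c d) (hV : IsChannel V)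
    (hγ : 0 < γ) : prob q {b | d b < M} ≤ M / γ := by
  rw [le_div_iff₀' hγ]
  calc γ * prob q {b | d b < M}
      ≤ ∑ b, ∑ i ∈ Finset.range M, {b | d b = i}.indicator (V (c i)) b := by
        rw [prob, Finset.mul_sum]
        refine Finset.sum_le_sum fun b _ => ?_
        by_cases hb : d b < M
        · simpa [indicator_apply, hb] using h.mul_le b hb
        · simp [indicator_apply, hb]
    _ = ∑ i ∈ Finset.range M, prob (V (c i)) {b | d b = i} := Finset.sum_comm
    _ ≤ M := by
        simpa only [Finset.card_range, nsmul_eq_mul, mul_one] using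
          Finset.sum_le_card_nsmul (Finset.range M) _ 1 fun i _ => (hV (c i)).prob_le_one _

theorem IsThresholdCode.exists_le_prob [Fintype A]
    (h : IsThresholdCode V (outDist P V) γ ε M c d) (hV : IsChannel V) (hP : IsDist P) (hγ : 0 < γ)
    (he : ∀ a, 0 < P a → prob (V a) {b | V a b < γ * outDist P V b} ≤ e) (hM : M / γ + e ≤ ε) :
    ∃ a, 1 - ε ≤ prob (V a) {b | γ * outDist P V b ≤ V a b ∧ M ≤ d b} := by
  obtain ⟨a, ha, hle⟩ := hP.exists_pos_and_le_expect fun a => prob (V a) {b | d b < M}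
  rw [← prob_outDist] at hle
  have hcover : (univ : Set B) ⊆ {b | γ * outDist P V b ≤ V a b ∧ M ≤ d b} ∪
      ({b | V a b < γ * outDist P V b} ∪ {b | d b < M}) := by
    intro b _
    simp only [mem_union, mem_ofPred_eq]
    grind
  have hprob := (prob_mono (hV a).1 hcover).trans ((prob_union_le (hV a).1 _ _).trans
    (add_le_add_right (prob_union_le (hV a).1 _ _) _))
  rw [(hV a).prob_univ] at hprob
  exact ⟨a, by linarith [he a ha, h.prob_lt_le hV hγ]⟩

theorem IsThresholdCode.extend (h : IsThresholdCode V q γ ε M c d) {a : A}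
    (ha : 1 - ε ≤ prob (V a) {b | γ * q b ≤ V a b ∧ M ≤ d b}) :
    IsThresholdCode V q γ ε (M + 1) (Function.update c M a)
      fun b => if d b < M then d b else if γ * q b ≤ V a b then M else M + 1 where
  le_prob i hi := by
    rcases Nat.lt_succ_iff_lt_or_eq.1 hi with hi | rfl
    · rw [Function.update_of_ne hi.ne]
      convert h.le_prob i hi using 3 with b
      grind
    · rw [Function.update_self]
      convert ha using 3 with b
      grind
  mul_le b hb := by
    by_cases hd : d b < M
    · simp only [hd, if_true, Function.update_of_ne hd.ne]
      exact h.mul_le b hd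
    · have hVb : γ * q b ≤ V a b := by grind
      simp only [hd, hVb, if_true, if_false, Function.update_self]

/-- Feinstein's greedy construction: while the decoding regions of the first `M` codewords have
small probability under `outDist P V`, some input is decoded outside them. -/
theorem exists_isThresholdCode [Fintype A] (hV : IsChannel V) (hP : IsDist P) (hγ : 0 < γ)
    (he : ∀ a, 0 < P a → prob (V a) {b | V a b < γ * outDist P V b} ≤ e) (M : ℕ)
    (hM : ∀ i < M, i / γ + e ≤ ε) : ∃ c d, IsThresholdCode V (outDist P V) γ ε M c d := by
  induction M with
  | zero =>
    obtain ⟨a, -⟩ := hP.exists_pos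
    exact ⟨fun _ => a, fun _ => 0, fun i hi => absurd hi i.not_lt_zero,
      fun b hb => absurd hb (Nat.not_lt_zero _)⟩
  | succ M ih =>
    obtain ⟨c, d, h⟩ := ih fun i hi => hM i (hi.trans M.lt_succ_self)
    obtain ⟨a, ha⟩ := h.exists_le_prob hV hP hγ he (hM M M.lt_succ_self)
    exact ⟨_, _, h.extend ha⟩

end Feinstein

section BlockCode

variable {α β : Type*} {n : ℕ}

/-- The feedback rule that ignores the outputs, sends the word `c` and then repeats `x₀`. -/
def blockRule (x₀ : α) (c : Fin n → α) (l : List β) : α :=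
  if h : l.length < n then c ⟨l.length, h⟩ else x₀

theorem pathProb_blockRule (W : α → β → ℝ) (x₀ : α) (c : Fin n → α) (y : Fin n → β) :
    pathProb W (blockRule x₀ c) n y = ∏ k, W (c k) (y k) := by
  refine Finset.prod_congr rfl fun k _ => ?_
  simp [blockRule, k.2.le]

theorem outDist_pathProb_blockRule [Fintype α] (P : α → ℝ) (W : α → β → ℝ) (x₀ : α)
    (y : Fin n → β) :
    outDist (fun c : Fin n → α => ∏ k, P (c k)) (fun c => pathProb W (blockRule x₀ c) n) y =
      ∏ k, outDist P W (y k) := by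
  simp only [outDist, pathProb_blockRule, ← Finset.prod_mul_distrib]
  rw [Finset.prod_univ_sum, Fintype.piFinset_univ]

theorem blockRule_pos {P : α → ℝ} (hP : ∀ x, 0 ≤ P x) {x₀ : α} (hx₀ : 0 < P x₀) {c : Fin n → α}
    (hc : 0 < ∏ k, P (c k)) (l : List β) : 0 < P (blockRule x₀ c l) := by
  rw [blockRule]
  split_ifs
  · exact (hP _).lt_of_ne' (Finset.prod_ne_zero_iff.1 hc.ne' _ (Finset.mem_univ _))
  · exact hx₀

theorem minErr_le_of_forall_le_prob [Fintype β] {W : α → β → ℝ} (hW : IsChannel W) {R ε : ℝ}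
    (enc : ℕ → List β → α) (dec : (Fin n → β) → ℕ)
    (h : ∀ i < ⌈Real.exp (n * R)⌉₊, 1 - ε ≤ prob (pathProb W (enc i) n) {y | dec y = i}) :
    minErr W n R ≤ ε := by
  set M := ⌈Real.exp (n * R)⌉₊
  have hM0 : 0 < M := natCeil_exp_pos _
  let g : (Fin n → β) → Fin M := fun y => if h : dec y < M then ⟨dec y, h⟩ else ⟨0, hM0⟩
  have herr : ∀ m : Fin M, prob (pathProb W (enc m) n) {y | g y ≠ m} ≤ ε := by
    intro m
    have hP := isDist_pathProb hW (enc m) n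
    have hsub : {y | g y ≠ m} ⊆ {y | dec y = m}ᶜ := by
      intro y hy hdec
      refine hy (Fin.ext ?_)
      simp only [g, show dec y = m from hdec, m.2, dif_pos]
    linarith [prob_mono hP.1 hsub, hP.prob_compl {y | dec y = m}, h m m.2]
  calc minErr W n R ≤ errProb W n M (fun m => enc m) g := minErr_le_errProb hW n R _ g
    _ ≤ (M : ℝ)⁻¹ * (M * ε) := by
        rw [errProb_eq_sum_prob]
        gcongr
        simpa only [Finset.card_univ, Fintype.card_fin, nsmul_eq_mul] using
          Finset.sum_le_card_nsmul Finset.univ _ ε fun m _ => herr m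
    _ = ε := by field_simp

end BlockCode

variable {P : X → ℝ} {W : X → Y → ℝ} {n : ℕ}

/-- Under an input word from the support of a capacity-achieving distribution, the information
density is centered, so Chebyshev's inequality applies. -/
theorem prob_pathProb_blockRule_lt_le (hW : IsChannel W) (hP : P ∈ capacityAchievers W)
    (hqP : qStar W = outDist P W) {v : ℝ} (hν : ∀ x, nu W x ≤ v) {x₀ : X} (hx₀ : 0 < P x₀) {κ : ℝ}
    (hκ : 0 < κ) (hn : 0 < n) {c : Fin n → X} (hc : 0 < ∏ k, P (c k)) :
    prob (pathProb W (blockRule x₀ c) n) {y | pathProb W (blockRule x₀ c) n y <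
      Real.exp (n * capacity W - κ * √n) * outDist (fun c : Fin n → X => ∏ k, P (c k))
        (fun c => pathProb W (blockRule x₀ c) n) y} ≤ v / κ ^ 2 := by
  have hn0 : (0 : ℝ) < n := Nat.cast_pos.2 hn
  have hmean : ∀ l : List Y,
      expect (W (blockRule x₀ c l)) (centeredDensity W (blockRule x₀ c l)) = 0 := fun l => by
    rw [expect_centeredDensity hW, hqP,
      divergence_outDist_eq_capacity hW hP (blockRule_pos hP.1.1 hx₀ hc l), sub_self]
  have hsq : ∀ l : List Y,
      expect (W (blockRule x₀ c l)) (fun b => centeredDensity W (blockRule x₀ c l) b ^ 2) ≤ v :=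
    fun l => by
      rw [← variance_eq_expect_sq (hmean l), variance_centeredDensity hW]
      exact hν _
  calc _ ≤ prob (pathProb W (blockRule x₀ c) n)
        {y | pathSum (centeredDensity W) (blockRule x₀ c) n y ≤ -(κ * √n)} := by
        refine prob_le_prob_of_ne_zero (isDist_pathProb hW _ n).1 fun y hy hlt => ?_
        rw [mem_ofPred_eq, outDist_pathProb_blockRule, ← hqP, pathProb_eq_exp_mul hW hy] at hlt
        have hexp := lt_of_mul_lt_mul_right hlt
          (Finset.prod_nonneg fun k _ => hqP ▸ (isDist_outDist hW hP.1).1 (y k))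
        rw [mem_ofPred_eq]
        linarith [Real.exp_lt_exp.1 hexp]
    _ ≤ n * v / (κ * √n) ^ 2 :=
        prob_pathSum_le_neg_le hW (mul_pos hκ (Real.sqrt_pos.2 hn0)) hmean hsq n
    _ = v / κ ^ 2 := by
        rw [mul_pow, Real.sq_sqrt hn0.le]
        field_simp

theorem exp_le_Mfb [Nonempty X] (hW : IsChannel W) {ε κ : ℝ} (hε : ε < 1) (hκ : 0 < κ) (hn : 0 < n)
    (hκε : numax W / κ ^ 2 + Real.exp (-(κ * √n)) ≤ ε) :
    Real.exp (n * capacity W - 2 * κ * √n) ≤ Mfb W n ε := by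
  obtain ⟨P, hP, hqP⟩ := exists_qStar_eq_outDist hW
  obtain ⟨x₀, hx₀⟩ := hP.1.exists_pos
  set R := capacity W - 2 * κ * √n / n with hR
  have hnR : n * R = n * capacity W - 2 * κ * √n := by
    rw [hR]
    field_simp
  have hM : ∀ i < ⌈Real.exp (n * R)⌉₊,
      i / Real.exp (n * capacity W - κ * √n) + numax W / κ ^ 2 ≤ ε := by
    intro i hi
    have hdiv : i / Real.exp (n * capacity W - κ * √n) ≤ Real.exp (-(κ * √n)) := by
      rw [div_le_iff₀ (Real.exp_pos _), ← Real.exp_add]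
      exact (Nat.lt_ceil.1 hi).le.trans_eq (congrArg Real.exp (by rw [hnR]; ring))
    linarith
  obtain ⟨c, d, hcode⟩ := exists_isThresholdCode
    (V := fun c : Fin n → X => pathProb W (blockRule x₀ c) n)
    (fun c => isDist_pathProb hW _ n) (hP.1.pi n) (Real.exp_pos _)
    (fun c hc => prob_pathProb_blockRule_lt_le hW hP hqP (nu_le_numax W) hx₀ hκ hn hc) _ hM
  have herr := minErr_le_of_forall_le_prob hW (fun i => blockRule x₀ (c i)) d hcode.le_prob
  rw [← hnR]
  exact (Nat.le_ceil _).trans (le_csSup (bddAbove_code_sizes hW n hε) ⟨R, rfl, herr⟩)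

theorem exists_eventually_exp_le_Mfb [Nonempty X] (hW : IsChannel W) {ε : ℝ} (hε0 : 0 < ε)
    (hε1 : ε < 1) :
    ∃ κ, ∀ᶠ n : ℕ in atTop, Real.exp (n * capacity W - κ * √n) ≤ Mfb W n ε := by
  have hlim : Tendsto (fun κ : ℝ => numax W / κ ^ 2 + Real.exp (-κ)) atTop (nhds 0) := by
    simpa only [add_zero] using (tendsto_const_nhds.div_atTop (tendsto_pow_atTop two_ne_zero)).add
      Real.tendsto_exp_neg_atTop_nhds_zero
  obtain ⟨κ, hκε, hκ⟩ := ((hlim.eventually_le_const hε0).and (eventually_gt_atTop 0)).exists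
  refine ⟨2 * κ, ?_⟩
  filter_upwards [eventually_ge_atTop 1] with n hn
  have hsqrt : κ ≤ κ * √n :=
    le_mul_of_one_le_right hκ.le (Real.one_le_sqrt.2 (Nat.one_le_cast.2 hn))
  refine exp_le_Mfb hW hε1 hκ hn (le_trans ?_ hκε)
  gcongr

end Achievability

/-! ### The second-order coding rate -/

section SecondOrder

variable {W : X → Y → ℝ}

theorem exists_eventually_le_SOfb [Nonempty X] (hW : IsChannel W) {ε : ℝ} (hε0 : 0 < ε)
    (hε1 : ε < 1) : ∃ c, ∀ᶠ n : ℕ in atTop, c ≤ SOfb W ε n := by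
  obtain ⟨κ, hκ⟩ := exists_eventually_exp_le_Mfb hW hε0 hε1
  refine ⟨-κ, ?_⟩
  filter_upwards [hκ, eventually_gt_atTop 0] with n hM hn
  have hlog := Real.log_le_log (Real.exp_pos _) hM
  rw [Real.log_exp] at hlog
  rw [SOfb, le_div_iff₀ (Real.sqrt_pos.2 (Nat.cast_pos.2 hn))]
  linarith

theorem eventually_SOfb_le [Nonempty X] (hW : IsChannel W) (hν : 0 < numin W) {ε r s : ℝ}
    (hε0 : 0 < ε) (hε1 : ε < 1) (hr : valueFn (√(numin W)) (√(numax W)) (-r) < 1 - ε)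
    (hrs : r < s) : ∀ᶠ n : ℕ in atTop, SOfb W ε n ≤ s := by
  obtain ⟨p, hrp, hpε⟩ := exists_between hr
  obtain ⟨B, hB, hbound⟩ := exists_abs_centeredDensity_le W
  obtain ⟨κ, hκ⟩ := exists_eventually_exp_le_Mfb hW hε0 hε1
  have htail := eventually_prob_lt_pathSum_le hW (Real.sqrt_pos.2 hν)
    (Real.sqrt_pos.2 (numax_pos hν)) hB (isAdmissible_centeredDensity hW hν.le hbound) hrp
  have hconst := tendsto_sqrt_natCast_atTop.eventually_ge_atTop (-Real.log (1 - ε - p) / (s - r))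
  filter_upwards [htail, hκ, hconst, eventually_gt_atTop 0] with n htail hM hconst hn
  rw [div_le_iff₀ (sub_pos.2 hrs)] at hconst
  rw [SOfb, div_le_iff₀ (Real.sqrt_pos.2 (Nat.cast_pos.2 hn)), sub_le_iff_le_add]
  calc Real.log (Mfb W n ε) ≤ Real.log (Real.exp (r * √n + n * capacity W) / (1 - ε - p)) :=
        Real.log_le_log ((Real.exp_pos _).trans_le hM) (Mfb_le hW htail hpε)
    _ = r * √n + n * capacity W - Real.log (1 - ε - p) := by
        rw [Real.log_div (Real.exp_pos _).ne' (sub_pos.2 hpε).ne', Real.log_exp]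
    _ ≤ s * √n + n * capacity W := by linarith

theorem limsup_SOfb_le [Nonempty X] (hW : IsChannel W) (hν : 0 < numin W) {ε r : ℝ} (hε0 : 0 < ε)
    (hε1 : ε < 1) (hr : valueFn (√(numin W)) (√(numax W)) (-r) = 1 - ε) :
    limsup (SOfb W ε) atTop ≤ r := by
  refine le_of_forall_gt_imp_ge_of_dense fun s hs => ?_
  obtain ⟨t, hrt, hts⟩ := exists_between hs
  have hmono := strictMono_valueFn (Real.sqrt_pos.2 hν) (Real.sqrt_pos.2 (numax_pos hν))
  -- The lower bound is what keeps the real-valued `limsup` from its junk value.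
  obtain ⟨c, hc⟩ := exists_eventually_le_SOfb hW hε0 hε1
  exact limsup_le_of_le (IsBoundedUnder.isCoboundedUnder_le ⟨c, hc⟩)
    (eventually_SOfb_le hW hν hε0 hε1 (hr ▸ hmono (neg_lt_neg hrt)) hts)

end SecondOrder

/-- Theorem 4 (Impossibility for compound-dispersion channels). -/
theorem impossibility_compound_dispersion
    {X Y : Type*} [Fintype X] [Fintype Y] [Nonempty X]
    (W : X → Y → ℝ) (hW : IsChannel W) (hcol : NoZeroColumn W)
    (hnumin : 0 < numin W)
    (lam : ℝ) (hlam : lam = Real.sqrt (numin W / numax W)) :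
    ∀ ε : ℝ, 0 < ε → ε < 1 →
      (ε ≤ lam / (1 + lam) →
        Filter.limsup (fun n : ℕ =>
            (Real.log (Mfb W n ε) - n * capacity W) / Real.sqrt n) Filter.atTop ≤
          Real.sqrt (numin W) * gcdfInv (1 / (2 * lam) * (ε * (1 + lam)))) ∧
      (lam / (1 + lam) < ε →
        Filter.limsup (fun n : ℕ =>
            (Real.log (Mfb W n ε) - n * capacity W) / Real.sqrt n) Filter.atTop ≤
          Real.sqrt (numax W) * gcdfInv (1 / 2 * (ε * (1 + lam) + (1 - lam)))) := by
  intro ε hε0 hε1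
  have h₁ := Real.sqrt_pos.2 hnumin
  have h₂ := Real.sqrt_pos.2 (numax_pos hnumin)
  have hlam0 : 0 < lam := hlam ▸ Real.sqrt_pos.2 (div_pos hnumin (numax_pos hnumin))
  have hs : √(numin W) = lam * √(numax W) := by
    rw [hlam, Real.sqrt_div hnumin.le, div_mul_cancel₀ _ h₂.ne']
  constructor <;> intro hε
  · have hp : 1 / (2 * lam) * (ε * (1 + lam)) ≤ 1 / 2 := by
      rw [le_div_iff₀ (by positivity)] at hε
      rw [one_div_mul_eq_div, div_le_iff₀ (by positivity)]
      linarith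
    refine limsup_SOfb_le hW hnumin hε0 hε1 ?_
    rw [valueFn_neg_mul_gcdfInv_of_le_half h₁ h₂ (by positivity) hp, hs]
    field_simp
    ring
  · rw [div_lt_iff₀ (by positivity)] at hε
    have hp : 1 / 2 ≤ 1 / 2 * (ε * (1 + lam) + (1 - lam)) := by linarith
    have hp1 : 1 / 2 * (ε * (1 + lam) + (1 - lam)) < 1 := by nlinarith
    refine limsup_SOfb_le hW hnumin hε0 hε1 ?_
    rw [valueFn_neg_mul_gcdfInv_of_half_le h₂ hp1 hp, hs]
    field_simp
    ring

end Paper
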